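/- Fix a nonzero integer Δ, let t be the number of distinct prime factors of Δ, and let n ∈ {2, 4, 6, 8, 10, 12}. Then the set of pairs (A, B) ∈ ℤ × ℤ such that 4A³ + 27B² ≠ 0, the discriminant −16(4A³ + 27B²) of the elliptic curve Y² = X³ + A·X + B equals Δ, and this curve has a rational point of order n, is finite and has cardinality at most 7⁶⁰ + 6·7^(2(t+1)). -/

import Mathlib

namespace EvenOrd

/-- The polynomials `W_m` (Padé approximants for three branch points). -/
def W {R : Type*} [CommRing R] (m : ℕ) (x y : R) : R :=
  ∑ k ∈ Finset.range (m + 1),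
    (((-1) ^ k * ((m + k).choose m : ℤ) * ((m + (m - k)).choose m : ℤ) : ℤ) : R) * (x ^ k * y ^ (m - k))

/-- coefficient of a shifted `W`. -/
def ec (m a b N p : ℕ) : ℤ :=
  (-1) ^ (p + a) * ((m + p - a).choose m : ℤ) * ((m + (N - p) - b).choose m : ℤ)

lemma W_shift {R : Type*} [CommRing R] (m : ℕ) (hm : 1 ≤ m) (a b N : ℕ) (hN : N = m + a + b) (x y : R) :
    x ^ a * y ^ b * W m x y =
      ∑ p ∈ Finset.range (N + 1), (ec m a b N p : R) * (x ^ p * y ^ (N - p)) := by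
  subst hN
  rw [show m + a + b + 1 = a + ((m + 1) + b) by ring, Finset.sum_range_add, Finset.sum_range_add]
  have h1 : ∑ p ∈ Finset.range a, (ec m a b (m + a + b) p : R) * (x ^ p * y ^ (m + a + b - p)) = 0 := by
    apply Finset.sum_eq_zero
    intro p hp
    have := Finset.mem_range.mp hp
    have : (m + p - a).choose m = 0 := Nat.choose_eq_zero_of_lt (by omega)
    simp [ec, this]
  have h2 : ∑ p ∈ Finset.range b, (ec m a b (m + a + b) (a + (m + 1 + p)) : R) *
      (x ^ (a + (m + 1 + p)) * y ^ (m + a + b - (a + (m + 1 + p)))) = 0 := by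
    apply Finset.sum_eq_zero
    intro p hp
    have := Finset.mem_range.mp hp
    have : (m + (m + a + b - (a + (m + 1 + p))) - b).choose m = 0 :=
      Nat.choose_eq_zero_of_lt (by omega)
    simp [ec, this]
  rw [h1, h2, zero_add, add_zero, W, Finset.mul_sum]
  apply Finset.sum_congr rfl
  intro k hk
  have hk := Finset.mem_range.mp hk
  have e1 : ec m a b (m + a + b) (a + k) =
      (-1) ^ k * ((m + k).choose m : ℤ) * ((m + (m - k)).choose m : ℤ) := by
    rw [ec, show m + (a + k) - a = m + k by omega,
      show m + (m + a + b - (a + k)) - b = m + (m - k) by omega,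
      show a + k + a = k + 2 * a by ring, pow_add, pow_mul]
    simp
  rw [e1, show m + a + b - (a + k) = b + (m - k) by omega]
  push_cast
  ring

lemma g_down (m i : ℕ) (hm : 1 ≤ m) : ((m + i - 1).choose m : ℚ) * (m + i) = (m + i).choose m * i := by
  rcases i with _ | i
  · have : (m - 1).choose m = 0 := Nat.choose_eq_zero_of_lt (by omega)
    simp [this]
  · have := Nat.choose_mul_succ_eq (m + i) m
    rw [show m + i + 1 - m = i + 1 by omega] at this
    rw [show m + (i + 1) - 1 = m + i by omega]
    have h : (((m + i).choose m * (m + i + 1) : ℕ) : ℚ) = ((m + i + 1).choose m * (i + 1) : ℕ) := by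
      rw [this]
    push_cast at h ⊢
    rw [show m + (i + 1) = m + i + 1 by ring]
    linarith

lemma g_up (m i : ℕ) : ((m + 1 + i).choose (m + 1) : ℚ) * (m + 1) = (m + i).choose m * (m + 1 + i) := by
  have := Nat.add_one_mul_choose_eq (m + i) m
  have h : (((m + i + 1) * (m + i).choose m : ℕ) : ℚ) = ((m + i + 1).choose (m + 1) * (m + 1) : ℕ) := by
    rw [this]
  push_cast at h
  rw [show m + 1 + i = m + i + 1 by ring]
  linarith

lemma g_d1 (m i : ℕ) (hm : 1 ≤ m) : ((m + i - 1).choose m : ℚ) = (m + i).choose m * (i / (m + i)) := by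
  have h := g_down m i hm
  have : (0 : ℚ) < m + i := by positivity
  field_simp
  linarith

lemma g_d2 (m i : ℕ) (hm : 2 ≤ m) : ((m + i - 2).choose m : ℚ) =
    (m + i).choose m * (i * (i - 1) / ((m + i) * (m + i - 1))) := by
  rcases i with _ | i
  · have : (m - 2).choose m = 0 := Nat.choose_eq_zero_of_lt (by omega)
    simp [this]
  · have h1 := g_d1 m (i + 1) (by omega)
    have h2 := g_d1 m i (by omega)
    rw [show m + (i + 1) - 1 = m + i by omega] at h1
    rw [show m + (i + 1) - 2 = m + i - 1 by omega, h2, h1]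
    have h2 : (2 : ℚ) ≤ m := by exact_mod_cast hm
    have h0 : (0 : ℚ) ≤ i := by positivity
    push_cast
    have e1 : (m : ℚ) + i ≠ 0 := by linarith
    have e2 : (m : ℚ) + (i + 1) ≠ 0 := by linarith
    have e3 : (m : ℚ) + (i + 1) - 1 ≠ 0 := by linarith
    field_simp
    ring

lemma g_d3 (m i : ℕ) (hm : 3 ≤ m) : ((m + i - 3).choose m : ℚ) =
    (m + i).choose m * (i * (i - 1) * (i - 2) / ((m + i) * (m + i - 1) * (m + i - 2))) := by
  rcases i with _ | i
  · have : (m - 3).choose m = 0 := Nat.choose_eq_zero_of_lt (by omega)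
    simp [this]
  · have h1 := g_d1 m (i + 1) (by omega)
    have h2 := g_d2 m i (by omega)
    rw [show m + (i + 1) - 1 = m + i by omega] at h1
    rw [show m + (i + 1) - 3 = m + i - 2 by omega, h2, h1]
    have h2 : (3 : ℚ) ≤ m := by exact_mod_cast hm
    have h0 : (0 : ℚ) ≤ i := by positivity
    push_cast
    have e1 : (m : ℚ) + i ≠ 0 := by linarith
    have e4 : (m : ℚ) + i - 1 ≠ 0 := by linarith
    have e2 : (m : ℚ) + (i + 1) ≠ 0 := by linarith
    have e3 : (m : ℚ) + (i + 1) - 1 ≠ 0 := by linarith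
    have e5 : (m : ℚ) + (i + 1) - 2 ≠ 0 := by linarith
    field_simp
    ring

lemma g_u1 (m i : ℕ) : ((m + 1 + i).choose (m + 1) : ℚ) = (m + i).choose m * ((m + 1 + i) / (m + 1)) := by
  have h := g_up m i
  have : (0 : ℚ) < m + 1 := by positivity
  field_simp
  linarith

lemma coef_id (m p q : ℕ) (hm : 2 ≤ m) (hpq : p + q = m + 4) :
    ((m + 1) * (m + 2) : ℤ) * (ec (m + 2) 0 2 (m + 4) p + 2 * ec (m + 2) 1 1 (m + 4) p +
      ec (m + 2) 2 0 (m + 4) p) =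
    (m + 1) * (2 * m + 3) * (-2 * ec (m + 1) 3 0 (m + 4) p - 3 * ec (m + 1) 2 1 (m + 4) p
      + 3 * ec (m + 1) 1 2 (m + 4) p + 2 * ec (m + 1) 0 3 (m + 4) p)
      + 3 * (9 * (m + 1) ^ 2 - 1) * ec m 2 2 (m + 4) p := by
  have hq : m + 4 - p = q := by omega
  have hs : (-1 : ℤ) ^ p * (-1) ^ p = 1 := by rw [← mul_pow]; simp
  simp only [ec, hq, pow_add, Nat.sub_zero]
  qify
  have hmq : (m : ℚ) = p + q - 4 := by
    have : ((p + q : ℕ) : ℚ) = ((m + 4 : ℕ) : ℚ) := by rw [hpq]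
    push_cast at this
    linarith
  rw [g_d1 (m + 2) p (by omega), g_d2 (m + 2) p (by omega), g_d1 (m + 2) q (by omega),
    g_d2 (m + 2) q (by omega), g_d1 (m + 1) p (by omega), g_d2 (m + 1) p (by omega),
    g_d3 (m + 1) p (by omega), g_d1 (m + 1) q (by omega), g_d2 (m + 1) q (by omega),
    g_d3 (m + 1) q (by omega), g_d2 m p (by omega), g_d2 m q (by omega),
    g_u1 (m + 1) p, g_u1 (m + 1) q, g_u1 m p, g_u1 m q]
  push_cast
  generalize (((m + p).choose m : ℕ) : ℚ) = A
  generalize (((m + q).choose m : ℕ) : ℚ) = B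
  generalize ((-1 : ℚ) ^ p) = S
  have h2 : (2 : ℚ) ≤ m := by exact_mod_cast hm
  have hp0 : (0 : ℚ) ≤ p := by positivity
  have hq0 : (0 : ℚ) ≤ q := by positivity
  have a1 : (m : ℚ) + 1 ≠ 0 := by linarith
  have a2 : (m : ℚ) + 1 + 1 ≠ 0 := by linarith
  have b1 : (m : ℚ) + p ≠ 0 := by linarith
  have b2 : (m : ℚ) + p - 1 ≠ 0 := by linarith
  have b3 : (m : ℚ) + 1 + p ≠ 0 := by linarith
  have b4 : (m : ℚ) + 2 + p ≠ 0 := by linarith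
  have c1 : (m : ℚ) + q ≠ 0 := by linarith
  have c2 : (m : ℚ) + q - 1 ≠ 0 := by linarith
  have c3 : (m : ℚ) + 1 + q ≠ 0 := by linarith
  have c4 : (m : ℚ) + 2 + q ≠ 0 := by linarith
  rw [show (m : ℚ) + 1 + p - 1 = m + p by ring, show (m : ℚ) + 1 + p - 2 = m + p - 1 by ring,
    show (m : ℚ) + 2 + p - 1 = m + 1 + p by ring, show (m : ℚ) + 1 + 1 + p = m + 2 + p by ring,
    show (m : ℚ) + 1 + q - 1 = m + q by ring, show (m : ℚ) + 1 + q - 2 = m + q - 1 by ring,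
    show (m : ℚ) + 2 + q - 1 = m + 1 + q by ring, show (m : ℚ) + 1 + 1 + q = m + 2 + q by ring]
  field_simp
  rw [hmq]
  ring

lemma W_zero {R : Type*} [CommRing R] (x y : R) : W 0 x y = 1 := by simp [W]
lemma W_one {R : Type*} [CommRing R] (x y : R) : W 1 x y = 2 * y - 2 * x := by
  simp [W, Finset.sum_range_succ]; ring
lemma W_two {R : Type*} [CommRing R] (x y : R) : W 2 x y = 6 * y ^ 2 - 9 * x * y + 6 * x ^ 2 := by
  simp [W, Finset.sum_range_succ, show Nat.choose 4 2 = 6 by decide]; ring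
lemma W_three {R : Type*} [CommRing R] (x y : R) : W 3 x y =
    20 * y ^ 3 - 40 * x * y ^ 2 + 40 * x ^ 2 * y - 20 * x ^ 3 := by
  simp [W, Finset.sum_range_succ, show Nat.choose 5 3 = 10 by decide,
    show Nat.choose 6 3 = 20 by decide]; ring

lemma W_rec {R : Type*} [CommRing R] (m : ℕ) (x y : R) :
    ((m + 1) * (m + 2) : R) * ((x + y) ^ 2 * W (m + 2) x y) =
      (m + 1) * (2 * m + 3) * ((-2 * x ^ 3 - 3 * x ^ 2 * y + 3 * x * y ^ 2 + 2 * y ^ 3) * W (m + 1) x y)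
      + 3 * (9 * (m + 1) ^ 2 - 1) * (x ^ 2 * y ^ 2 * W m x y) := by
  rcases Nat.lt_or_ge m 2 with hm | hm
  · interval_cases m
    · simp only [W_zero, W_one, W_two, zero_add]; push_cast; ring
    · simp only [W_three, W_one, W_two, Nat.reduceAdd]; push_cast; ring
  have e1 := W_shift (m + 2) (by omega) 0 2 (m + 4) (by omega) x y
  have e2 := W_shift (m + 2) (by omega) 1 1 (m + 4) (by omega) x y
  have e3 := W_shift (m + 2) (by omega) 2 0 (m + 4) (by omega) x y
  have f0 := W_shift (m + 1) (by omega) 3 0 (m + 4) (by omega) x y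
  have f1 := W_shift (m + 1) (by omega) 2 1 (m + 4) (by omega) x y
  have f2 := W_shift (m + 1) (by omega) 1 2 (m + 4) (by omega) x y
  have f3 := W_shift (m + 1) (by omega) 0 3 (m + 4) (by omega) x y
  have g0 := W_shift m (by omega) 2 2 (m + 4) (by omega) x y
  have l : ((m + 1) * (m + 2) : R) * ((x + y) ^ 2 * W (m + 2) x y) = (m + 1) * (m + 2) *
      (x ^ 0 * y ^ 2 * W (m + 2) x y + 2 * (x ^ 1 * y ^ 1 * W (m + 2) x y) + x ^ 2 * y ^ 0 * W (m + 2) x y) := by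
    ring
  have r : (m + 1) * (2 * m + 3) * ((-2 * x ^ 3 - 3 * x ^ 2 * y + 3 * x * y ^ 2 + 2 * y ^ 3) * W (m + 1) x y)
      + 3 * (9 * (m + 1) ^ 2 - 1) * (x ^ 2 * y ^ 2 * W m x y) = 
      (m + 1) * (2 * m + 3) * (-2 * (x ^ 3 * y ^ 0 * W (m + 1) x y) - 3 * (x ^ 2 * y ^ 1 * W (m + 1) x y)
      + 3 * (x ^ 1 * y ^ 2 * W (m + 1) x y) + 2 * (x ^ 0 * y ^ 3 * W (m + 1) x y))
      + 3 * (9 * (m + 1) ^ 2 - 1) * (x ^ 2 * y ^ 2 * W m x y) := by ring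
  rw [l, r, e1, e2, e3, f0, f1, f2, f3, g0]
  simp only [Finset.mul_sum, ← Finset.sum_add_distrib, ← Finset.sum_sub_distrib]
  apply Finset.sum_congr rfl
  intro p hp
  have hp := Finset.mem_range.mp hp
  have key := coef_id m p (m + 4 - p) hm (by omega)
  have key2 := congrArg (fun z : ℤ => (z : R) * (x ^ p * y ^ (m + 4 - p))) key
  push_cast at key2
  linear_combination key2

lemma W_symm {R : Type*} [CommRing R] (m : ℕ) (x y : R) : W m y x = (-1) ^ m * W m x y := by
  unfold W
  rw [← Finset.sum_range_reflect, Finset.mul_sum]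
  apply Finset.sum_congr rfl
  intro k hk
  have hk := Finset.mem_range.mp hk
  rw [show m + 1 - 1 - k = m - k by omega, show m - (m - k) = k by omega]
  have : ((-1 : R)) ^ (m - k) = (-1) ^ m * (-1) ^ k := by
    conv_rhs => rw [show m = (m - k) + k by omega, pow_add]
    rw [mul_assoc, ← mul_pow]; simp
  push_cast
  rw [this]; ring

lemma W_neg {R : Type*} [CommRing R] (m : ℕ) (x y : R) : W m (-x) (-y) = (-1) ^ m * W m x y := by
  unfold W
  rw [Finset.mul_sum]
  apply Finset.sum_congr rfl
  intro k hk
  have hk := Finset.mem_range.mp hk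
  rw [neg_pow x, neg_pow y]
  have : ((-1 : R)) ^ m = (-1) ^ k * (-1) ^ (m - k) := by rw [← pow_add]; congr 1; omega
  rw [this]; ring

lemma W_map {R S : Type*} [CommRing R] [CommRing S] (f : R →+* S) (m : ℕ) (x y : R) :
    f (W m x y) = W m (f x) (f y) := by
  simp [W, map_sum]

/-- sum of the absolute values of the coefficients -/
lemma choose_conv (a b m : ℕ) : ∑ k ∈ Finset.range (m + 1), (a + k).choose a * (b + (m - k)).choose b =
    (a + b + 1 + m).choose m := by
  have h := PowerSeries.invOneSubPow_add (S := ℤ) (a + 1) (b + 1)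
  have h1 := congrArg (fun u : (PowerSeries ℤ)ˣ => PowerSeries.coeff m u.val) h
  rw [show a + 1 + (b + 1) = (a + b + 1) + 1 by ring] at h1
  simp only [Units.val_mul, PowerSeries.invOneSubPow_val_succ_eq_mk_add_choose,
    PowerSeries.coeff_mul, PowerSeries.coeff_mk] at h1
  rw [Finset.Nat.sum_antidiagonal_eq_sum_range_succ_mk] at h1
  rw [show (a + b + 1 + m).choose m = (a + b + 1 + m).choose (a + b + 1) from
    Nat.choose_symm_of_eq_add (by ring)]
  exact_mod_cast h1.symm

lemma W_coef_le (m : ℕ) : ∑ k ∈ Finset.range (m + 1), (m + k).choose m * (m + (m - k)).choose m ≤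
    2 ^ (3 * m) := by
  rw [choose_conv]
  rcases m with _ | m
  · simp
  · have h1 : (m + 1 + (m + 1) + 1 + (m + 1)).choose (m + 1) ≤
        (m + 1 + (m + 1) + 1 + (m + 1)).choose (m + 2) := by
      apply Nat.choose_le_succ_of_lt_half_left
      omega
    have h2 := Nat.sum_range_choose (m + 1 + (m + 1) + 1 + (m + 1))
    have h3 : ∑ i ∈ ({m + 1, m + 2} : Finset ℕ), (m + 1 + (m + 1) + 1 + (m + 1)).choose i ≤
        ∑ i ∈ Finset.range (m + 1 + (m + 1) + 1 + (m + 1) + 1), (m + 1 + (m + 1) + 1 + (m + 1)).choose i := by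
      apply Finset.sum_le_sum_of_subset
      intro i hi
      simp only [Finset.mem_insert, Finset.mem_singleton] at hi
      simp only [Finset.mem_range]
      omega
    rw [Finset.sum_pair (by omega), h2] at h3
    have h4 : 2 ^ (m + 1 + (m + 1) + 1 + (m + 1)) = 2 * 2 ^ (3 * (m + 1)) := by
      rw [← pow_succ']; congr 1; ring
    omega

end EvenOrd

namespace EvenOrd

/-- one coordinate of the approximating triple -/
def tp {R : Type*} [CommRing R] (m : ℕ) (x y z : R) : R := x ^ (2 * m + 1) * W m y z

lemma tp_rec {R : Type*} [CommRing R] (m : ℕ) (x y z : R) (h : x + y + z = 0) :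
    ((m + 1) * (m + 2) : R) * tp (m + 2) x y z =
      (m + 1) * (2 * m + 3) * ((x - y) * (y - z) * (z - x)) * tp (m + 1) x y z
      + 3 * (9 * (m + 1) ^ 2 - 1) * (x * y * z) ^ 2 * tp m x y z := by
  have hw := W_rec m y z
  have hx : x = -(y + z) := by linear_combination h
  have h2 : (y + z) ^ 2 = x ^ 2 := by rw [hx]; ring
  have h3 : (-2 * y ^ 3 - 3 * y ^ 2 * z + 3 * y * z ^ 2 + 2 * z ^ 3) = (x - y) * (y - z) * (z - x) := by
    rw [hx]; ring
  rw [h2, h3] at hw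
  unfold tp
  rw [show 2 * (m + 2) + 1 = 2 * m + 1 + 4 by ring, show 2 * (m + 1) + 1 = 2 * m + 1 + 2 by ring,
    pow_add x (2 * m + 1) 4, pow_add x (2 * m + 1) 2]
  linear_combination (x ^ (2 * m + 1) * x ^ 2) * hw

lemma tp_sum {R : Type*} [CommRing R] (hR : ∀ (k : ℕ) (r : R), k ≠ 0 → (k : R) * r = 0 → r = 0)
    (x y z : R) (h : x + y + z = 0) (m : ℕ) :
    tp m x y z + tp m y z x + tp m z x y = 0 := by
  induction m using Nat.twoStepInduction with
  | zero => simp only [tp, W_zero]; linear_combination h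
  | one =>
    simp only [tp, W_one]
    have hx : x = -(y + z) := by linear_combination h
    rw [hx]; ring
  | more m h0 h1 =>
    apply hR ((m + 1) * (m + 2)) _ (by positivity)
    have e1 := tp_rec m x y z h
    have e2 := tp_rec m y z x (by linear_combination h)
    have e3 := tp_rec m z x y (by linear_combination h)
    push_cast
    linear_combination e1 + e2 + e3 + 3 * (9 * (m + 1) ^ 2 - 1) * (x * y * z) ^ 2 * h0 +
      (m + 1) * (2 * m + 3) * ((x - y) * (y - z) * (z - x)) * h1

/-- the determinant of the approximating triple with a second triple -/
def dl {R : Type*} [CommRing R] (m : ℕ) (x y z x' y' : R) : R := x' * tp m y z x - y' * tp m x y z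

lemma dl_cyc {R : Type*} [CommRing R] (hR : ∀ (k : ℕ) (r : R), k ≠ 0 → (k : R) * r = 0 → r = 0)
    (x y z x' y' z' : R) (h : x + y + z = 0) (h' : x' + y' + z' = 0) (m : ℕ) :
    dl m x y z x' y' = dl m y z x y' z' := by
  have := tp_sum hR x y z h m
  unfold dl
  linear_combination (tp m y z x) * h' - y' * this

structure Abs {R : Type*} [CommRing R] (a : R → ℝ) (κ : ℝ) : Prop where
  nonneg : ∀ x, 0 ≤ a x
  mul : ∀ x y, a (x * y) = a x * a y
  one : a 1 = 1
  zero : a 0 = 0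
  neg : ∀ x, a (-x) = a x
  int : ∀ k : ℤ, a (k : R) = 0 → k = 0
  hκ : 1 ≤ κ
  add : ∀ x y, a (x + y) ≤ κ * max (a x) (a y)
  hW : ∀ m x y, a (W m x y) ≤ κ ^ (3 * m) * max (a x) (a y) ^ m

namespace Abs
variable {R : Type*} [CommRing R] {a : R → ℝ} {κ : ℝ}

lemma pow (A : Abs a κ) (x : R) (n : ℕ) : a (x ^ n) = a x ^ n := by
  induction n with
  | zero => simp [A.one]
  | succ n ih => rw [pow_succ, A.mul, ih, pow_succ]

lemma zero_of (A : Abs a κ) (x y : R) (hx : a x = 0) (hy : a y = 0) : a (x + y) = 0 := by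
  apply le_antisymm _ (A.nonneg _)
  have := A.add x y
  rw [hx, hy] at this
  simpa using this

lemma det_zero (A : Abs a κ) (x y z : R) (h : x + y + z = 0) (hx : a x ≠ 0) (hy : a y ≠ 0) (hz : a z ≠ 0) (m : ℕ)
    (hD : a (tp m x y z * tp (m + 1) y z x - tp m y z x * tp (m + 1) x y z) = 0) :
    a (x ^ 2 + x * y + y ^ 2) = 0 := by
  induction m with
  | zero =>
    have e : tp 0 x y z * tp (0 + 1) y z x - tp 0 y z x * tp (0 + 1) x y z =
        ((-2 : ℤ) : R) * (x * y * z) * (x ^ 2 + x * y + y ^ 2) := by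
      simp only [tp, zero_add, W_zero, W_one]
      have hx : z = -(x + y) := by linear_combination h
      rw [hx]; push_cast; ring
    rw [e, A.mul, A.mul, A.mul, A.mul] at hD
    have h2 : a ((-2 : ℤ) : R) ≠ 0 := fun h => by have := A.int _ h; omega
    simpa only [mul_eq_zero, hx, hy, hz, h2, false_or, or_false] using hD
  | succ m ih =>
    apply ih
    have e1 := tp_rec m x y z h
    have e2 := tp_rec m y z x (by linear_combination h)
    have e : (((m + 1) * (m + 2) : ℕ) : R) *
        (tp (m + 1) x y z * tp (m + 1 + 1) y z x - tp (m + 1) y z x * tp (m + 1 + 1) x y z) =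
        ((-(3 * (9 * (m + 1) ^ 2 - 1)) : ℤ) : R) * (x * y * z) ^ 2 *
        (tp m x y z * tp (m + 1) y z x - tp m y z x * tp (m + 1) x y z) := by
      push_cast
      linear_combination (tp (m + 1) x y z) * e2 - (tp (m + 1) y z x) * e1
    have e3 := congrArg a e
    rw [A.mul, hD, mul_zero, A.mul, A.mul, A.pow, A.mul, A.mul] at e3
    have h2 : a ((-(3 * (9 * (m + 1) ^ 2 - 1)) : ℤ) : R) ≠ 0 := fun h => by
      have := A.int _ h
      have h0 : (0 : ℤ) ≤ m := by positivity
      nlinarith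
    have := e3.symm
    simpa only [mul_eq_zero, pow_eq_zero_iff two_ne_zero, hx, hy, hz, h2, false_or, or_false] using this

lemma tp_le (A : Abs a κ) (x y z : R) (M : ℝ) (hy : a y ≤ M) (hz : a z ≤ M) (m : ℕ) :
    a (tp m x y z) ≤ κ ^ (3 * m) * (a x ^ (2 * m + 1) * M ^ m) := by
  unfold tp
  rw [A.mul, A.pow]
  have h1 := A.hW m y z
  have h0 := A.nonneg x
  have h0y := A.nonneg y
  have hk : 0 ≤ κ := by linarith [A.hκ]
  calc a x ^ (2 * m + 1) * a (W m y z) ≤ a x ^ (2 * m + 1) * (κ ^ (3 * m) * M ^ m) := by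
        gcongr
        refine h1.trans ?_
        gcongr
        exact max_le hy hz
    _ = _ := by ring

lemma dl_le (A : Abs a κ) (x y z x' y' : R) (M M' ε : ℝ) (hx : a x ≤ M) (hy : a y ≤ M) (hz : a z ≤ M)
    (hy' : a y' ≤ M') (m : ℕ) (h1 : a x' ≤ M' * ε)
    (h2 : a x ^ (2 * m + 1) ≤ M ^ (2 * m + 1) * ε) :
    a (dl m x y z x' y') ≤ κ ^ (3 * m + 1) * (M' * M ^ (3 * m + 1) * ε) := by
  have hk : 0 ≤ κ := by linarith [A.hκ]
  have hM : 0 ≤ M := (A.nonneg _).trans hx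
  have hM' : 0 ≤ M' := (A.nonneg _).trans hy'
  have k := A.add (x' * tp m y z x) (-(y' * tp m x y z))
  rw [← sub_eq_add_neg, A.neg, A.mul, A.mul] at k
  unfold dl
  refine k.trans ?_
  rw [pow_succ', mul_assoc]
  refine mul_le_mul_of_nonneg_left (max_le ?_ ?_) hk
  · have t := A.tp_le y z x M hz hx m
    calc a x' * a (tp m y z x) ≤ (M' * ε) * (κ ^ (3 * m) * (a y ^ (2 * m + 1) * M ^ m)) := by
          apply mul_le_mul h1 t (A.nonneg _) ((A.nonneg _).trans h1)
      _ ≤ (M' * ε) * (κ ^ (3 * m) * (M ^ (2 * m + 1) * M ^ m)) := by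
          apply mul_le_mul_of_nonneg_left _ ((A.nonneg _).trans h1)
          have := A.nonneg y
          gcongr
      _ = _ := by ring
  · have t := A.tp_le x y z M hy hz m
    calc a y' * a (tp m x y z) ≤ M' * (κ ^ (3 * m) * ((M ^ (2 * m + 1) * ε) * M ^ m)) := by
          apply mul_le_mul hy' (t.trans _) (A.nonneg _) hM'
          gcongr
      _ = _ := by ring

end Abs

/-- maximum over a triple -/
noncomputable def mx {R : Type*} (a : R → ℝ) (w : Fin 3 → R) : ℝ := max (a (w 0)) (max (a (w 1)) (a (w 2)))
/-- minimum over a triple -/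
noncomputable def mn {R : Type*} (a : R → ℝ) (w : Fin 3 → R) : ℝ := min (a (w 0)) (min (a (w 1)) (a (w 2)))

lemma le_mx {R : Type*} (a : R → ℝ) (w : Fin 3 → R) (i : Fin 3) : a (w i) ≤ mx a w := by
  fin_cases i <;> simp [mx]

lemma mn_le {R : Type*} (a : R → ℝ) (w : Fin 3 → R) (i : Fin 3) : mn a w ≤ a (w i) := by
  fin_cases i <;> simp [mn]

lemma exists_mn {R : Type*} (a : R → ℝ) (w : Fin 3 → R) : ∃ i, a (w i) = mn a w := by
  unfold mn
  rcases min_choice (a (w 1)) (a (w 2)) with h | h <;>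
  rcases min_choice (a (w 0)) (min (a (w 1)) (a (w 2))) with h' | h' <;> rw [h'] <;>
    first | exact ⟨0, rfl⟩ | (rw [h]; first | exact ⟨1, rfl⟩ | exact ⟨2, rfl⟩)

lemma Abs.dl_le3 {R : Type*} [CommRing R] {a : R → ℝ} {κ : ℝ} (A : Abs a κ)
    (hR : ∀ (k : ℕ) (r : R), k ≠ 0 → (k : R) * r = 0 → r = 0)
    (w w' : Fin 3 → R) (hw : w 0 + w 1 + w 2 = 0) (hw' : w' 0 + w' 1 + w' 2 = 0) (m : ℕ) (ε : ℝ)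
    (c : Fin 3) (h1 : a (w' c) ≤ mx a w' * ε) (h2 : a (w c) ^ (2 * m + 1) ≤ mx a w ^ (2 * m + 1) * ε) :
    a (dl m (w 0) (w 1) (w 2) (w' 0) (w' 1)) ≤ κ ^ (3 * m + 1) * (mx a w' * mx a w ^ (3 * m + 1) * ε) := by
  have e1 := dl_cyc hR _ _ _ _ _ _ hw hw' m
  have e2 := dl_cyc hR (w 1) (w 2) (w 0) (w' 1) (w' 2) (w' 0) (by linear_combination hw)
    (by linear_combination hw') m
  fin_cases c
  · exact A.dl_le _ _ _ _ _ _ _ _ (le_mx a w 0) (le_mx a w 1) (le_mx a w 2) (le_mx a w' 1) m h1 h2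
  · rw [e1]
    exact A.dl_le _ _ _ _ _ _ _ _ (le_mx a w 1) (le_mx a w 2) (le_mx a w 0) (le_mx a w' 2) m h1 h2
  · rw [e1, e2]
    exact A.dl_le _ _ _ _ _ _ _ _ (le_mx a w 2) (le_mx a w 0) (le_mx a w 1) (le_mx a w' 0) m h1 h2

lemma Abs.prod_ge {R : Type*} [CommRing R] {a : R → ℝ} {κ : ℝ} (A : Abs a κ)
    (w : Fin 3 → R) (hw : w 0 + w 1 + w 2 = 0) :
    mx a w ^ 2 * mn a w ≤ κ * (a (w 0) * a (w 1) * a (w 2)) := by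
  have k0 := A.add (w 1) (w 2)
  have k1 := A.add (w 0) (w 2)
  have k2 := A.add (w 0) (w 1)
  rw [show w 1 + w 2 = -w 0 by linear_combination hw, A.neg] at k0
  rw [show w 0 + w 2 = -w 1 by linear_combination hw, A.neg] at k1
  rw [show w 0 + w 1 = -w 2 by linear_combination hw, A.neg] at k2
  have p0 := A.nonneg (w 0)
  have p1 := A.nonneg (w 1)
  have p2 := A.nonneg (w 2)
  have hk := A.hκ
  unfold mx mn
  generalize a (w 0) = x at *
  generalize a (w 1) = y at *
  generalize a (w 2) = z at *
  have key : ∀ x y z : ℝ, 0 ≤ x → x ≤ y → y ≤ z → z ≤ κ * y → z ^ 2 * x ≤ κ * (x * y * z) := by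
    intro x y z hx hxy hyz h
    have : 0 ≤ x * z := mul_nonneg hx (by linarith)
    nlinarith
  rcases le_total x y with h1 | h1 <;> rcases le_total y z with h2 | h2 <;>
    rcases le_total x z with h3 | h3 <;>
    simp only [max_eq_left, max_eq_right, min_eq_left, min_eq_right, h1, h2, h3] at k0 k1 k2 ⊢
  all_goals first
    | (have := key x y z p0 (by linarith) (by linarith) (by linarith); linarith)
    | (have := key x z y p0 (by linarith) (by linarith) (by linarith); linarith)
    | (have := key y x z p1 (by linarith) (by linarith) (by linarith); linarith)
    | (have := key y z x p1 (by linarith) (by linarith) (by linarith); linarith)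
    | (have := key z x y p2 (by linarith) (by linarith) (by linarith); linarith)
    | (have := key z y x p2 (by linarith) (by linarith) (by linarith); linarith)
    | (obtain rfl : x = y := by linarith
       obtain rfl : x = z := by linarith
       have := key x x x p0 le_rfl le_rfl (by linarith); linarith)

end EvenOrd

namespace EvenOrd
open Finset

/-- nonzero integers all of whose prime factors lie in `P` -/
def SU (P : Finset ℕ) (k : ℤ) : Prop := k ≠ 0 ∧ ∀ p : ℕ, p.Prime → (p : ℤ) ∣ k → p ∈ P

/-- a family of absolute values on `ℤ√N` satisfying product formulas -/
structure Places (N : ℤ) (P : Finset ℕ) {ι : Type} [Fintype ι] (a : ι → ℤ√N → ℝ) (κ : ι → ℝ) :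
    Prop where
  abs : ∀ v, Abs (a v) (κ v)
  prodk : ∏ v, κ v = 2
  ge : ∀ k : ℤ, k ≠ 0 → 1 ≤ ∏ v, a v (k : ℤ√N)
  unit : ∀ k : ℤ, SU P k → ∏ v, a v (k : ℤ√N) = 1
  cop : ∀ x y : ℤ, IsCoprime x y → max |(x : ℝ)| |(y : ℝ)| ≤ ∏ v, max (a v (x : ℤ√N)) (a v (y : ℤ√N))
  hN : SU P (4 * N)

/-- the triple attached to `Y` -/
def tr (N Y : ℤ) : Fin 3 → ℤ√N := ![⟨Y, -1⟩, ⟨-Y, -1⟩, ⟨0, 2⟩]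

lemma tr_sum (N Y : ℤ) : tr N Y 0 + tr N Y 1 + tr N Y 2 = 0 := by
  ext <;> simp [tr]

/-- solutions -/
def Sol (N : ℤ) (P : Finset ℕ) (Y : ℤ) : Prop := ∃ D : ℤ, Y ^ 2 = 4 * D ^ 3 + N ∧ SU P D

lemma zs_tors (N : ℤ) (k : ℕ) (r : ℤ√N) (hk : k ≠ 0) (h : (k : ℤ√N) * r = 0) : r = 0 := by
  have h1 := congrArg Zsqrtd.re h
  have h2 := congrArg Zsqrtd.im h
  simp at h1 h2
  ext
  · simpa [hk] using h1
  · simpa [hk] using h2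

lemma SU.mul {P : Finset ℕ} {x y : ℤ} (hx : SU P x) (hy : SU P y) : SU P (x * y) := by
  refine ⟨mul_ne_zero hx.1 hy.1, fun p hp h => ?_⟩
  rcases (Nat.prime_iff_prime_int.1 hp).dvd_mul.1 h with h | h
  · exact hx.2 p hp h
  · exact hy.2 p hp h

lemma SU.of_dvd {P : Finset ℕ} {x y : ℤ} (hx : SU P x) (h : y ∣ x) : SU P y :=
  ⟨fun h0 => hx.1 (by rwa [h0, zero_dvd_iff] at h), fun p hp hd => hx.2 p hp (hd.trans h)⟩

lemma SU.pow {P : Finset ℕ} {x : ℤ} (hx : SU P x) (n : ℕ) : SU P (x ^ n) :=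
  ⟨pow_ne_zero _ hx.1, fun p hp hd => hx.2 p hp ((Nat.prime_iff_prime_int.1 hp).dvd_of_dvd_pow hd)⟩

section
variable {N : ℤ} {P : Finset ℕ} {ι : Type} [Fintype ι] {a : ι → ℤ√N → ℝ} {κ : ι → ℝ}

lemma tr_mul (N Y D : ℤ) (h : Y ^ 2 = 4 * D ^ 3 + N) :
    tr N Y 0 * tr N Y 1 = ((-(4 * D ^ 3) : ℤ) : ℤ√N) := by
  have e1 : tr N Y 0 = ⟨Y, -1⟩ := rfl
  have e2 : tr N Y 1 = ⟨-Y, -1⟩ := rfl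
  rw [e1, e2]
  ext
  · simp only [Zsqrtd.re_mul, Zsqrtd.re_intCast]; linear_combination -h
  · simp only [Zsqrtd.im_mul, Zsqrtd.im_intCast]; ring

lemma tr_two (N Y : ℤ) : tr N Y 2 * tr N Y 2 = ((4 * N : ℤ) : ℤ√N) := by
  have e1 : tr N Y 2 = ⟨0, 2⟩ := rfl
  rw [e1]
  ext
  · simp only [Zsqrtd.re_mul, Zsqrtd.re_intCast]; ring
  · simp only [Zsqrtd.im_mul, Zsqrtd.im_intCast]; ring


lemma Places.su4 (G : Places N P a κ) : SU P 4 := G.hN.of_dvd ⟨N, rfl⟩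

lemma Places.pos2 (G : Places N P a κ) (Y : ℤ) (v : ι) : 0 < a v (tr N Y 2) := by
  refine lt_of_le_of_ne ((G.abs v).nonneg _) fun h => ?_
  have := congrArg (a v) (tr_two N Y)
  rw [(G.abs v).mul, ← h, zero_mul] at this
  exact G.hN.1 ((G.abs v).int _ this.symm)

lemma Places.pos (G : Places N P a κ) (Y : ℤ) (hY : Sol N P Y) (v : ι) (i : Fin 3) : 0 < a v (tr N Y i) := by
  refine lt_of_le_of_ne ((G.abs v).nonneg _) fun h => ?_
  obtain ⟨D, h1, h2⟩ := hY
  have e := congrArg (a v) (tr_mul N Y D h1)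
  rw [(G.abs v).mul] at e
  have h3 : -(4 * D ^ 3) ≠ 0 := by have := h2.1; simpa using this
  fin_cases i
  · change 0 = a v (tr N Y 0) at h
    rw [← h, zero_mul] at e
    exact h3 ((G.abs v).int _ e.symm)
  · change 0 = a v (tr N Y 1) at h
    rw [← h, mul_zero] at e
    exact h3 ((G.abs v).int _ e.symm)
  · exact (G.pos2 Y v).ne h

lemma Places.prod2 (G : Places N P a κ) (Y : ℤ) : ∏ v, a v (tr N Y 2) = 1 := by
  have h1 := G.unit _ G.hN
  rw [← tr_two N Y] at h1
  simp only [(G.abs _).mul, prod_mul_distrib] at h1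
  have h2 : 0 ≤ ∏ v, a v (tr N Y 2) := prod_nonneg fun v _ => (G.abs v).nonneg _
  nlinarith

lemma Places.prod01 (G : Places N P a κ) (Y : ℤ) (hY : Sol N P Y) : ∏ v, (a v (tr N Y 0) * a v (tr N Y 1)) = 1 := by
  obtain ⟨D, h1, h2⟩ := hY
  have := G.unit _ (G.su4.mul (h2.pow 3))
  rw [← this]
  refine prod_congr rfl fun v _ => ?_
  rw [← (G.abs v).mul, tr_mul N Y D h1, Int.cast_neg, (G.abs v).neg]

end

/-- local log-quality -/
noncomputable def lam {N : ℤ} {ι : Type} (a : ι → ℤ√N → ℝ) (Y : ℤ) (v : ι) : ℝ :=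
  Real.log (mx (a v) (tr N Y)) - Real.log (mn (a v) (tr N Y))
/-- global log-quality -/
noncomputable def Lam {N : ℤ} {ι : Type} [Fintype ι] (a : ι → ℤ√N → ℝ) (Y : ℤ) : ℝ := ∑ v, lam a Y v
/-- log-height -/
noncomputable def Ht {N : ℤ} {ι : Type} [Fintype ι] (a : ι → ℤ√N → ℝ) (Y : ℤ) : ℝ :=
  ∑ v, Real.log (mx (a v) (tr N Y))

/-- the determinant -/
def del (N : ℤ) (m : ℕ) (Y Y' : ℤ) : ℤ√N :=
  dl m (tr N Y 0) (tr N Y 1) (tr N Y 2) (tr N Y' 0) (tr N Y' 1)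

lemma star_W {N : ℤ} (m : ℕ) (x y : ℤ√N) : star (W m x y) = W m (star x) (star y) := by
  have := W_map (starRingEnd (ℤ√N)) m x y
  simpa [starRingEnd_apply] using this

lemma tr_star0 (N Y : ℤ) : star (tr N Y 0) = - tr N Y 1 := by ext <;> simp [tr]
lemma tr_star1 (N Y : ℤ) : star (tr N Y 1) = - tr N Y 0 := by ext <;> simp [tr]
lemma tr_star2 (N Y : ℤ) : star (tr N Y 2) = - tr N Y 2 := by ext <;> simp [tr]

lemma del_star (N : ℤ) (m : ℕ) (Y Y' : ℤ) : star (del N m Y Y') = - del N m Y Y' := by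
  unfold del dl tp
  simp only [star_sub, star_mul, star_pow, star_W, tr_star0, tr_star1, tr_star2]
  have e : ∀ x : ℤ√N, (-x) ^ (2 * m + 1) = - x ^ (2 * m + 1) := fun x =>
    Odd.neg_pow ⟨m, rfl⟩ x
  simp only [W_neg, e]
  rw [W_symm m (tr N Y 1) (tr N Y 2), W_symm m (tr N Y 2) (tr N Y 0)]
  have s : ((-1 : ℤ√N) ^ m) * (-1) ^ m = 1 := by rw [← mul_pow]; simp
  generalize (-1 : ℤ√N) ^ m = q at *
  linear_combination (-1 : ℤ√N) * (tr N Y' 0 * tr N Y 1 ^ (2 * m + 1) * W m (tr N Y 2) (tr N Y 0) - tr N Y' 1 * tr N Y 0 ^ (2 * m + 1) * W m (tr N Y 1) (tr N Y 2)) * s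

end EvenOrd

namespace EvenOrd
open Finset

section
variable {N : ℤ} {P : Finset ℕ} {ι : Type} [Fintype ι] {a : ι → ℤ√N → ℝ} {κ : ι → ℝ}

lemma Places.mx_pos (G : Places N P a κ) (Y : ℤ) (v : ι) : 0 < mx (a v) (tr N Y) :=
  (G.pos2 Y v).trans_le (le_mx _ _ 2)

lemma Places.mn_pos (G : Places N P a κ) (Y : ℤ) (hY : Sol N P Y) (v : ι) : 0 < mn (a v) (tr N Y) := by
  obtain ⟨i, hi⟩ := exists_mn (a v) (tr N Y)
  rw [← hi]; exact G.pos Y hY v i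

lemma Places.lam_nonneg (G : Places N P a κ) (Y : ℤ) (hY : Sol N P Y) (v : ι) : 0 ≤ lam a Y v :=
  sub_nonneg.2 (Real.log_le_log (G.mn_pos Y hY v) ((mn_le _ _ 0).trans (le_mx _ _ 0)))

lemma Places.Lam_nonneg (G : Places N P a κ) (Y : ℤ) (hY : Sol N P Y) : 0 ≤ Lam a Y :=
  sum_nonneg fun v _ => G.lam_nonneg Y hY v

lemma Places.kpos (G : Places N P a κ) (v : ι) : 0 < κ v := by linarith [(G.abs v).hκ]

lemma Places.sum_logk (G : Places N P a κ) : ∑ v, Real.log (κ v) = Real.log 2 := by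
  rw [← Real.log_prod fun v _ => (G.kpos v).ne', G.prodk]

lemma Places.three_H (G : Places N P a κ) (Y : ℤ) (hY : Sol N P Y) : 3 * Ht a Y ≤ Lam a Y + Real.log 2 := by
  have h : ∀ v, 2 * Real.log (mx (a v) (tr N Y)) + Real.log (mn (a v) (tr N Y)) ≤
      Real.log (κ v) + Real.log (a v (tr N Y 0) * a v (tr N Y 1)) + Real.log (a v (tr N Y 2)) := by
    intro v
    have h1 := (G.abs v).prod_ge (tr N Y) (tr_sum N Y)
    have p0 := G.pos Y hY v 0
    have p1 := G.pos Y hY v 1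
    have p2 := G.pos Y hY v 2
    have pm := G.mx_pos Y v
    have pn := G.mn_pos Y hY v
    have h2 := Real.log_le_log (by positivity) h1
    rw [Real.log_mul (by positivity) pn.ne', Real.log_pow, Real.log_mul (G.kpos v).ne' (by positivity),
      Real.log_mul (by positivity) p2.ne'] at h2
    push_cast at h2
    linarith
  have h' := sum_le_sum fun v (_ : v ∈ (univ : Finset ι)) => h v
  rw [sum_add_distrib, sum_add_distrib, sum_add_distrib, ← mul_sum, G.sum_logk,
    ← Real.log_prod fun v _ => (mul_pos (G.pos Y hY v 0) (G.pos Y hY v 1)).ne', G.prod01 Y hY,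
    ← Real.log_prod fun v _ => (G.pos Y hY v 2).ne', G.prod2] at h'
  simp only [Real.log_one, add_zero] at h'
  unfold Lam Ht lam
  rw [sum_sub_distrib]
  linarith

lemma Places.norm_sq (G : Places N P a κ) (m : ℕ) (Y Y' : ℤ) (v : ι) :
    a v (((del N m Y Y').norm : ℤ) : ℤ√N) = a v (del N m Y Y') * a v (del N m Y Y') := by
  rw [Zsqrtd.norm_eq_mul_conj, del_star, (G.abs v).mul, (G.abs v).neg]

lemma Places.del_pos (G : Places N P a κ) (m : ℕ) (Y Y' : ℤ) (h : (del N m Y Y').norm ≠ 0) (v : ι) :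
    0 < a v (del N m Y Y') := by
  refine lt_of_le_of_ne ((G.abs v).nonneg _) fun h0 => h ?_
  apply (G.abs v).int
  rw [G.norm_sq, ← h0, mul_zero]

lemma Places.del_ge (G : Places N P a κ) (m : ℕ) (Y Y' : ℤ) (h : (del N m Y Y').norm ≠ 0) :
    0 ≤ ∑ v, Real.log (a v (del N m Y Y')) := by
  have h1 := G.ge _ h
  simp only [G.norm_sq, prod_mul_distrib] at h1
  rw [← Real.log_prod fun v _ => (G.del_pos m Y Y' h v).ne']
  apply Real.log_nonneg
  have h2 : 0 ≤ ∏ v, a v (del N m Y Y') := prod_nonneg fun v _ => (G.abs v).nonneg _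
  nlinarith

lemma Places.main (G : Places N P a κ) (Y Y' : ℤ) (hY : Sol N P Y) (hY' : Sol N P Y') (Γ : ι → ℝ) (hΓ : ∀ v, 0 ≤ Γ v)
    (c : ι → Fin 3)
    (h1 : ∀ v, Γ v * Lam a Y ≤ Real.log (mx (a v) (tr N Y)) - Real.log (a v (tr N Y (c v))))
    (h2 : ∀ v, Γ v * Lam a Y' ≤ Real.log (mx (a v) (tr N Y')) - Real.log (a v (tr N Y' (c v))))
    (m : ℕ) (hd : (del N m Y Y').norm ≠ 0) :
    (∑ v, Γ v) * min (Lam a Y') ((2 * m + 1) * Lam a Y) ≤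
      Ht a Y' + (3 * m + 1) * Ht a Y + (3 * m + 1) * Real.log 2 := by
  set μ := min (Lam a Y') ((2 * m + 1) * Lam a Y) with hμ
  have hμ1 : μ ≤ Lam a Y' := min_le_left _ _
  have hμ2 : μ ≤ (2 * m + 1) * Lam a Y := min_le_right _ _
  have h : ∀ v, Real.log (a v (del N m Y Y')) ≤ (3 * m + 1) * Real.log (κ v) +
      Real.log (mx (a v) (tr N Y')) + (3 * m + 1) * Real.log (mx (a v) (tr N Y)) - Γ v * μ := by
    intro v
    have px := G.mx_pos Y v
    have px' := G.mx_pos Y' v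
    have pc := G.pos Y hY v (c v)
    have pc' := G.pos Y' hY' v (c v)
    have pk := G.kpos v
    have k1 : a v (tr N Y' (c v)) ≤ mx (a v) (tr N Y') * Real.exp (- (Γ v * μ)) := by
      rw [← Real.log_le_log_iff pc' (by positivity), Real.log_mul px'.ne' (Real.exp_pos _).ne',
        Real.log_exp]
      have := h2 v
      have := mul_le_mul_of_nonneg_left hμ1 (hΓ v)
      linarith
    have k2 : a v (tr N Y (c v)) ^ (2 * m + 1) ≤ mx (a v) (tr N Y) ^ (2 * m + 1) *
        Real.exp (- (Γ v * μ)) := by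
      rw [← Real.log_le_log_iff (by positivity) (by positivity), Real.log_mul (by positivity)
        (Real.exp_pos _).ne', Real.log_exp, Real.log_pow, Real.log_pow]
      have t1 := mul_le_mul_of_nonneg_left (h1 v) (show (0 : ℝ) ≤ 2 * m + 1 by positivity)
      have t2 := mul_le_mul_of_nonneg_left hμ2 (hΓ v)
      push_cast
      linarith
    have k3 := (G.abs v).dl_le3 (zs_tors N) (tr N Y) (tr N Y') (tr_sum N Y) (tr_sum N Y') m _ (c v) k1 k2
    have k4 := Real.log_le_log (G.del_pos m Y Y' hd v) k3
    rw [Real.log_mul (by positivity) (by positivity), Real.log_mul (by positivity) (by positivity),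
      Real.log_mul (by positivity) (by positivity), Real.log_exp, Real.log_pow, Real.log_pow] at k4
    push_cast at k4
    linarith
  have h' := (G.del_ge m Y Y' hd).trans (sum_le_sum fun v (_ : v ∈ (univ : Finset ι)) => h v)
  rw [sum_sub_distrib, sum_add_distrib, sum_add_distrib, ← mul_sum, ← mul_sum, ← sum_mul,
    G.sum_logk] at h'
  unfold Ht
  linarith

lemma del_zero_norm (hN : N ≠ 0) (Y Y' : ℤ) (h : Y ≠ Y') : (del N 0 Y Y').norm ≠ 0 := by
  have : del N 0 Y Y' = ⟨0, 2 * (Y - Y')⟩ := by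
    unfold del dl tp
    simp only [W_zero]
    ext <;> simp [tr]
    ring
  rw [this, Zsqrtd.norm_def]
  have := sub_ne_zero.2 h
  simp [hN, this]

lemma Places.two_zero (G : Places N P a κ) (Y Y' : ℤ) (hY : Sol N P Y) (hY' : Sol N P Y') (m : ℕ)
    (h0 : (del N m Y Y').norm = 0) (h1 : (del N (m + 1) Y Y').norm = 0) : Lam a Y = 0 := by
  refine sum_eq_zero fun v _ => ?_
  have A := G.abs v
  have dz : ∀ k, (del N k Y Y').norm = 0 → a v (del N k Y Y') = 0 := by
    intro k hk
    have := G.norm_sq k Y Y' v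
    rw [hk, Int.cast_zero, A.zero] at this
    exact mul_self_eq_zero.1 this.symm
  have d0 := dz m h0
  have d1 := dz (m + 1) h1
  have p0 := G.pos Y hY v 0
  have p1 := G.pos Y hY v 1
  have p2 := G.pos Y hY v 2
  have p0' := G.pos Y' hY' v 0
  have key : ∀ x y z x' y' : ℤ√N, x' * (tp m x y z * tp (m + 1) y z x - tp m y z x * tp (m + 1) x y z) =
      -(dl m x y z x' y') * tp (m + 1) x y z + dl (m + 1) x y z x' y' * tp m x y z := by
    intro x y z x' y'; unfold dl; ring
  have e := congrArg (a v) (key (tr N Y 0) (tr N Y 1) (tr N Y 2) (tr N Y' 0) (tr N Y' 1))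
  rw [A.mul, A.zero_of] at e
  rotate_left
  · rw [A.mul, A.neg]; unfold del at d0; rw [d0, zero_mul]
  · rw [A.mul]; unfold del at d1; rw [d1, zero_mul]
  have e2 := A.det_zero _ _ _ (tr_sum N Y) p0.ne' p1.ne' p2.ne' m
    ((mul_eq_zero.1 e).resolve_left p0'.ne')
  have e3 : tr N Y 0 ^ 2 + tr N Y 0 * tr N Y 1 + tr N Y 1 ^ 2 = ((Y ^ 2 + 3 * N : ℤ) : ℤ√N) := by
    have t0 : tr N Y 0 = ⟨Y, -1⟩ := rfl
    have t1 : tr N Y 1 = ⟨-Y, -1⟩ := rfl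
    rw [t0, t1, pow_two, pow_two]
    ext
    · simp only [Zsqrtd.re_mul, Zsqrtd.re_add, Zsqrtd.re_intCast]; ring
    · simp only [Zsqrtd.im_mul, Zsqrtd.im_add, Zsqrtd.im_intCast]; ring
  rw [e3] at e2
  have e4 := A.int _ e2
  rw [e4, Int.cast_zero] at e3
  have hs := tr_sum N Y
  have c1 : tr N Y 0 ^ 3 = tr N Y 1 ^ 3 := by linear_combination (tr N Y 0 - tr N Y 1) * e3
  have c2 : tr N Y 1 ^ 3 = tr N Y 2 ^ 3 := by
    have : tr N Y 2 = -(tr N Y 0 + tr N Y 1) := by linear_combination hs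
    rw [this]; linear_combination (2 * tr N Y 1 + tr N Y 0) * e3
  have q1 := congrArg (a v) c1
  have q2 := congrArg (a v) c2
  rw [A.pow, A.pow] at q1 q2
  have q1 := (pow_left_inj₀ p0.le p1.le (by norm_num)).1 q1
  have q2 := (pow_left_inj₀ p1.le p2.le (by norm_num)).1 q2
  simp [lam, mx, mn, q1, q2]

end
end EvenOrd

namespace EvenOrd
open Finset

lemma gap_chain (f : ℤ → ℝ) (k : ℕ) : ∀ T : Finset ℤ, T.card = k + 1 →
    (∀ x ∈ T, 0 ≤ f x) →
    (∀ x ∈ T, ∀ y ∈ T, x ≠ y → f x ≤ f y → 1.52 * f x ≤ f y) →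
    ∃ x ∈ T, ∃ y ∈ T, (∀ z ∈ T, f x ≤ f z) ∧ 1.52 ^ k * f x ≤ f y := by
  induction k with
  | zero =>
    intro T hT h0 _
    obtain ⟨x, rfl⟩ := card_eq_one.1 hT
    exact ⟨x, by simp, x, by simp, by simp, by simp⟩
  | succ k ih =>
    intro T hT h0 hg
    obtain ⟨x, hx, hm⟩ := exists_min_image T f (card_pos.1 (by omega))
    have hc : (T.erase x).card = k + 1 := by rw [card_erase_of_mem hx]; omega
    obtain ⟨x', hx', y, hy, hmin, hxy⟩ := ih (T.erase x) hc (fun z hz => h0 z (mem_of_mem_erase hz))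
      (fun u hu w hw => hg u (mem_of_mem_erase hu) w (mem_of_mem_erase hw))
    refine ⟨x, hx, y, mem_of_mem_erase hy, hm, le_trans ?_ hxy⟩
    have := hg x hx x' (mem_of_mem_erase hx') (ne_of_mem_erase hx').symm (hm _ (mem_of_mem_erase hx'))
    rw [pow_succ, mul_assoc]
    gcongr

lemma twelve (f : ℤ → ℝ) (T : Finset ℤ) (h100 : ∀ x ∈ T, 100 ≤ f x)
    (hg : ∀ x ∈ T, ∀ y ∈ T, x ≠ y → f x ≤ f y → 1.52 * f x ≤ f y)
    (hl : ∀ x ∈ T, ∀ y ∈ T, 200 ≤ f x → f y ≤ 48 * f x) : T.card ≤ 12 := by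
  have h0 : ∀ x ∈ T, 0 ≤ f x := fun x hx => by linarith [h100 x hx]
  have c1 : (T.filter fun x => f x < 200).card ≤ 2 := by
    by_contra! h
    obtain ⟨k, hk⟩ := Nat.exists_eq_add_of_lt h
    obtain ⟨x, hx, y, hy, _, hxy⟩ := gap_chain f (k + 2) (T.filter fun x => f x < 200) (by omega)
      (fun z hz => h0 z (mem_filter.1 hz).1)
      (fun u hu w hw => hg u (mem_filter.1 hu).1 w (mem_filter.1 hw).1)
    have a1 := h100 x (mem_filter.1 hx).1
    have a2 := (mem_filter.1 hy).2
    have : (1 : ℝ) ≤ 1.52 ^ k := one_le_pow₀ (by norm_num)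
    have : (1 : ℝ) * 1.52 ^ 2 * 100 ≤ 1.52 ^ (k + 2) * f x := by
      rw [pow_add]; gcongr
    norm_num at this
    linarith
  have c2 : (T.filter fun x => ¬ f x < 200).card ≤ 10 := by
    by_contra h
    rw [not_le] at h
    obtain ⟨k, hk⟩ := Nat.exists_eq_add_of_lt h
    obtain ⟨x, hx, y, hy, _, hxy⟩ := gap_chain f (k + 10) (T.filter fun x => ¬ f x < 200) (by omega)
      (fun z hz => h0 z (mem_filter.1 hz).1)
      (fun u hu w hw => hg u (mem_filter.1 hu).1 w (mem_filter.1 hw).1)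
    have a1 := not_lt.1 (mem_filter.1 hx).2
    have a2 := hl x (mem_filter.1 hx).1 y (mem_filter.1 hy).1 a1
    have : (1 : ℝ) ≤ 1.52 ^ k := one_le_pow₀ (by norm_num)
    have : (1 : ℝ) * 1.52 ^ 10 * f x ≤ 1.52 ^ (k + 10) * f x := by
      rw [pow_add]; gcongr
    have : (1 : ℝ) * 1.52 ^ 10 * f x > 48 * f x := by norm_num; linarith
    linarith
  have := card_filter_add_card_filter_not (s := T) (fun x => f x < 200)
  omega

section
variable {N : ℤ} {P : Finset ℕ} {ι : Type} [Fintype ι] {a : ι → ℤ√N → ℝ} {κ : ι → ℝ}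

lemma Places.hN0 (G : Places N P a κ) : N ≠ 0 := fun h => G.hN.1 (by simp [h])

lemma Places.main' (G : Places N P a κ) (Y Y' : ℤ) (hY : Sol N P Y) (hY' : Sol N P Y') (Γ : ι → ℝ) (hΓ : ∀ v, 0 ≤ Γ v)
    (hs : ∑ v, Γ v = 6 / 7) (c : ι → Fin 3)
    (h1 : ∀ v, Γ v * Lam a Y ≤ Real.log (mx (a v) (tr N Y)) - Real.log (a v (tr N Y (c v))))
    (h2 : ∀ v, Γ v * Lam a Y' ≤ Real.log (mx (a v) (tr N Y')) - Real.log (a v (tr N Y' (c v))))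
    (m : ℕ) (hd : (del N m Y Y').norm ≠ 0) :
    18 / 7 * min (Lam a Y') ((2 * m + 1) * Lam a Y) ≤
      Lam a Y' + (3 * m + 1) * Lam a Y + (12 * m + 5) * Real.log 2 := by
  have h := G.main Y Y' hY hY' Γ hΓ c h1 h2 m hd
  rw [hs] at h
  have t1 := G.three_H Y hY
  have t2 := G.three_H Y' hY'
  have t3 := mul_le_mul_of_nonneg_left t1 (show (0 : ℝ) ≤ 3 * m + 1 by positivity)
  linarith

lemma Places.ratio (G : Places N P a κ) (Y Y' : ℤ) (hY : Sol N P Y) (hY' : Sol N P Y') (Γ : ι → ℝ) (hΓ : ∀ v, 0 ≤ Γ v)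
    (hs : ∑ v, Γ v = 6 / 7) (c : ι → Fin 3)
    (h1 : ∀ v, Γ v * Lam a Y ≤ Real.log (mx (a v) (tr N Y)) - Real.log (a v (tr N Y (c v))))
    (h2 : ∀ v, Γ v * Lam a Y' ≤ Real.log (mx (a v) (tr N Y')) - Real.log (a v (tr N Y' (c v))))
    (hL : 200 * Real.log 2 ≤ Lam a Y) : Lam a Y' ≤ 48 * Lam a Y := by
  by_contra! hlt
  have l2 : 0 < Real.log 2 := Real.log_pos (by norm_num)
  have hpos : 0 < Lam a Y := by linarith
  have step : ∀ m : ℕ, 7 / 11 * (3 * m + 1 + (12 * m + 5) / 200) * Lam a Y < Lam a Y' →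
      Lam a Y' < ((15 * m + 11) / 7 - (12 * m + 5) / 200) * Lam a Y → (del N m Y Y').norm = 0 := by
    intro m k1 k2
    by_contra hd
    have h := G.main' Y Y' hY hY' Γ hΓ hs c h1 h2 m hd
    have hb : (12 * m + 5) * Real.log 2 ≤ (12 * m + 5) * (Lam a Y / 200) := by
      gcongr; linarith
    rcases min_choice (Lam a Y') ((2 * m + 1) * Lam a Y) with e | e <;> rw [e] at h
    · linarith
    · linarith
  obtain ⟨r, hr⟩ : ∃ r, r * Lam a Y = Lam a Y' := ⟨Lam a Y' / Lam a Y, by field_simp⟩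
  have hr48 : 48 < r := by rw [← hr] at hlt; exact lt_of_mul_lt_mul_right hlt hpos.le
  set m := ⌊(r - 433 / 280) / (729 / 350)⌋₊ + 1 with hm
  have f1 : (⌊(r - 433 / 280) / (729 / 350)⌋₊ : ℝ) ≤ (r - 433 / 280) / (729 / 350) :=
    Nat.floor_le (by apply div_nonneg <;> linarith)
  have f2 := Nat.lt_floor_add_one ((r - 433 / 280) / (729 / 350))
  have hm' : (m : ℝ) = ⌊(r - 433 / 280) / (729 / 350)⌋₊ + 1 := by rw [hm]; push_cast; ring
  rw [le_div_iff₀ (by norm_num)] at f1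
  rw [div_lt_iff₀ (by norm_num), ← hm'] at f2
  have g1 : ((m : ℝ) - 1) * (729 / 350) ≤ r - 433 / 280 := by rw [hm']; linarith
  have m23 : 23 ≤ m := by
    by_contra! h
    have : (m : ℝ) ≤ 22 := by exact_mod_cast (by omega : m ≤ 22)
    linarith
  have low : 7 / 11 * (3 * ((m : ℝ) + 1) + 1 + (12 * ((m : ℝ) + 1) + 5) / 200) < r := by
    rcases Nat.lt_or_ge 23 m with h | h
    · have : (24 : ℝ) ≤ m := by exact_mod_cast h
      linarith
    · have : (m : ℝ) = 23 := by exact_mod_cast (by omega : m = 23)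
      rw [this]; linarith
  have hm0 : (0 : ℝ) ≤ m := by positivity
  have z0 := step m (by rw [← hr]; gcongr; linarith) (by rw [← hr]; gcongr; linarith)
  have z1 := step (m + 1) (by rw [← hr]; push_cast; gcongr) (by rw [← hr]; push_cast; gcongr; linarith)
  exact hpos.ne' (G.two_zero Y Y' hY hY' m z0 z1)

lemma Places.class_card (G : Places N P a κ) (Γ : ι → ℝ) (hΓ : ∀ v, 0 ≤ Γ v)
    (hs : ∑ v, Γ v = 6 / 7) (c : ι → Fin 3) (T : Finset ℤ) (hT : ∀ Y ∈ T, Sol N P Y)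
    (hT1 : ∀ Y ∈ T, 100 * Real.log 2 ≤ Lam a Y)
    (hT2 : ∀ Y ∈ T, ∀ v, Γ v * Lam a Y ≤ Real.log (mx (a v) (tr N Y)) - Real.log (a v (tr N Y (c v)))) :
    T.card ≤ 12 := by
  have l2 : 0 < Real.log 2 := Real.log_pos (by norm_num)
  apply twelve (fun Y => Lam a Y / Real.log 2)
  · intro x hx
    rw [le_div_iff₀ l2]; exact hT1 x hx
  · intro x hx y hy hxy hle
    have hle' : Lam a x ≤ Lam a y := (div_le_div_iff_of_pos_right l2).1 hle
    have h := G.main' x y (hT x hx) (hT y hy) Γ hΓ hs c (hT2 x hx) (hT2 y hy) 0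
      (del_zero_norm G.hN0 x y hxy)
    simp only [Nat.cast_zero, mul_zero, zero_add, one_mul] at h
    rw [min_eq_right hle'] at h
    rw [← mul_div_assoc]
    gcongr
    have := hT1 x hx
    linarith
  · intro x hx y hy h
    rw [le_div_iff₀ l2] at h
    have := G.ratio x y (hT x hx) (hT y hy) Γ hΓ hs c (hT2 x hx) (hT2 y hy) h
    change Lam a y / _ ≤ 48 * (Lam a x / _)
    rw [← mul_div_assoc]
    gcongr

end
end EvenOrd

namespace EvenOrd
open Finset

lemma sub_vec {ι : Type} [DecidableEq ι] (f : ι → ℕ) (s : Finset ι) : ∀ n ≤ ∑ v ∈ s, f v,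
    ∃ k : ι → ℕ, (∀ v, k v ≤ f v) ∧ ∑ v ∈ s, k v = n := by
  induction s using Finset.induction_on with
  | empty => intro n hn; exact ⟨fun _ => 0, by simp, by simp at hn; simp [hn]⟩
  | insert v s hv ih =>
    intro n hn
    rw [sum_insert hv] at hn
    obtain ⟨k, h1, h2⟩ := ih (n - min (f v) n) (by omega)
    refine ⟨Function.update k v (min (f v) n), fun u => ?_, ?_⟩
    · by_cases h : u = v
      · subst h; simp
      · simp [h, h1 u]
    · rw [sum_insert hv, Function.update_self, sum_update_of_notMem hv, h2]
      omega

lemma kvec {ι : Type} [Fintype ι] [Nonempty ι] (l : ι → ℝ) (hl : ∀ v, 0 ≤ l v) (hL : 0 < ∑ v, l v) :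
    ∃ k : ι → ℕ, ∑ v, k v = 6 * Fintype.card ι ∧
      ∀ v, (k v : ℝ) / (7 * Fintype.card ι) * ∑ v, l v ≤ l v := by
  classical
  set L := ∑ v, l v with hLdef
  set s := Fintype.card ι with hs
  have hs0 : (0 : ℝ) < s := by exact_mod_cast Fintype.card_pos
  let f : ι → ℕ := fun v => ⌊7 * s * l v / L⌋₊
  have hf : 6 * s ≤ ∑ v, f v := by
    have h1 : ∑ v, (7 * s * l v / L - 1) < ∑ v, (f v : ℝ) :=
      sum_lt_sum_of_nonempty univ_nonempty fun v _ => by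
        have := Nat.lt_floor_add_one (7 * s * l v / L)
        change _ < ((⌊7 * s * l v / L⌋₊ : ℕ) : ℝ)
        linarith
    rw [sum_sub_distrib, ← sum_div, ← mul_sum, ← hLdef] at h1
    simp only [sum_const, card_univ, nsmul_eq_mul, mul_one] at h1
    rw [← hs, mul_div_assoc, div_self hL.ne'] at h1
    have h2 : (((6 * s : ℕ)) : ℝ) < ((∑ v, f v : ℕ) : ℝ) := by push_cast; linarith
    exact_mod_cast h2.le
  obtain ⟨k, h1, h2⟩ := sub_vec f univ _ hf
  refine ⟨k, h2, fun v => ?_⟩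
  have h3 : (k v : ℝ) ≤ 7 * s * l v / L :=
    le_trans (Nat.cast_le.2 (h1 v)) (Nat.floor_le (div_nonneg (mul_nonneg (by positivity) (hl v)) hL.le))
  rw [le_div_iff₀ hL] at h3
  rw [div_mul_eq_mul_div, div_le_iff₀ (by positivity)]
  linarith

/-- local class data -/
def clB (K : ℕ) : Finset (ℕ × Fin 3) := insert (0, 0) ((Icc 1 K) ×ˢ univ)

/-- class data -/
def clS (ι : Type) [Fintype ι] [DecidableEq ι] : Finset (ι → ℕ × Fin 3) :=
  (Fintype.piFinset fun _ => clB (6 * Fintype.card ι)).filter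
    fun g => ∑ v, (g v).1 = 6 * Fintype.card ι

lemma clB_sum (K : ℕ) : ∑ b ∈ clB K, (21 / 25 : ℝ) ^ b.1 ≤ 67 / 4 := by
  unfold clB
  rw [sum_insert (by simp), sum_product]
  simp only [pow_zero, sum_const, card_univ, Fintype.card_fin, nsmul_eq_mul]
  have : ∀ K : ℕ, ∑ k ∈ Icc 1 K, ((3 : ℕ) : ℝ) * (21 / 25 : ℝ) ^ k = 63 / 4 - 63 / 4 * (21 / 25) ^ K := by
    intro K
    induction K with
    | zero => simp
    | succ n ih => rw [sum_Icc_succ_top (by omega), ih, pow_succ]; push_cast; ring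
  rw [this]
  have : (0 : ℝ) ≤ (21 / 25) ^ K := by positivity
  linarith

lemma clS_card (ι : Type) [Fintype ι] [DecidableEq ι] :
    ((clS ι).card : ℝ) ≤ ((25 / 21) ^ 6 * (67 / 4)) ^ Fintype.card ι := by
  set s := Fintype.card ι with hs
  have h1 : ((clS ι).card : ℝ) * (21 / 25) ^ (6 * s) ≤ (67 / 4) ^ s := by
    calc ((clS ι).card : ℝ) * (21 / 25) ^ (6 * s) = ∑ g ∈ clS ι, ∏ v, (21 / 25 : ℝ) ^ (g v).1 := by
          rw [← nsmul_eq_mul, ← sum_const]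
          refine sum_congr rfl fun g hg => ?_
          rw [prod_pow_eq_pow_sum, (mem_filter.1 hg).2]
      _ ≤ ∑ g ∈ Fintype.piFinset fun _ : ι => clB (6 * s), ∏ v, (21 / 25 : ℝ) ^ (g v).1 :=
          sum_le_sum_of_subset_of_nonneg (filter_subset _ _) fun g _ _ => by positivity
      _ = ∏ v : ι, ∑ b ∈ clB (6 * s), (21 / 25 : ℝ) ^ b.1 :=
          (prod_univ_sum (fun _ : ι => clB (6 * s)) fun _ b => (21 / 25 : ℝ) ^ b.1).symm
      _ ≤ ∏ v : ι, (67 / 4 : ℝ) := prod_le_prod (fun _ _ => sum_nonneg fun _ _ => by positivity)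
          fun _ _ => clB_sum _
      _ = _ := by rw [prod_const, card_univ]
  rw [mul_pow, ← pow_mul]
  have h2 : ((25 / 21 : ℝ) ^ (6 * s)) * (21 / 25) ^ (6 * s) = 1 := by rw [← mul_pow]; norm_num
  have h3 := mul_le_mul_of_nonneg_left h1 (show (0 : ℝ) ≤ (25 / 21) ^ (6 * s) by positivity)
  calc ((clS ι).card : ℝ) = ((25 / 21 : ℝ) ^ (6 * s)) * ((clS ι).card * (21 / 25) ^ (6 * s)) := by
        linear_combination (-((clS ι).card : ℝ)) * h2
    _ ≤ _ := h3

section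
variable {N : ℤ} {P : Finset ℕ} {ι : Type} [Fintype ι] {a : ι → ℤ√N → ℝ} {κ : ι → ℝ}

lemma Places.exists_class (G : Places N P a κ) [DecidableEq ι] (Y : ℤ) (hY : Sol N P Y) (hL : 0 < Lam a Y) :
    ∃ g ∈ clS ι, ∀ v, ((g v).1 : ℝ) / (7 * Fintype.card ι) * Lam a Y ≤
      Real.log (mx (a v) (tr N Y)) - Real.log (a v (tr N Y (g v).2)) := by
  have : Nonempty ι := by
    by_contra h
    rw [not_nonempty_iff] at h
    simp [Lam] at hL
  obtain ⟨k, h1, h2⟩ := kvec (fun v => lam a Y v) (G.lam_nonneg Y hY) hL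
  choose c hc using fun v => exists_mn (a v) (tr N Y)
  refine ⟨fun v => (k v, if k v = 0 then 0 else c v), ?_, fun v => ?_⟩
  · refine mem_filter.2 ⟨Fintype.mem_piFinset.2 fun v => ?_, h1⟩
    by_cases h : k v = 0
    · simp [clB, h]
    · simp only [h, if_false, clB, mem_insert, mem_product, mem_Icc, mem_univ, and_true]
      right
      refine ⟨by omega, ?_⟩
      rw [← h1]; exact single_le_sum (fun _ _ => Nat.zero_le _) (mem_univ v)
  · by_cases h : k v = 0
    · simp only [h, if_true, Nat.cast_zero, zero_div, zero_mul]
      exact sub_nonneg.2 (Real.log_le_log (G.pos Y hY v 0) (le_mx _ _ 0))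
    · simp only [h, if_false]
      rw [hc v]
      exact h2 v

lemma Places.big_card (G : Places N P a κ) (T : Finset ℤ) (hT : ∀ Y ∈ T, Sol N P Y)
    (hT1 : ∀ Y ∈ T, 100 * Real.log 2 ≤ Lam a Y) :
    (T.card : ℝ) ≤ 12 * ((25 / 21) ^ 6 * (67 / 4)) ^ Fintype.card ι := by
  classical
  rcases isEmpty_or_nonempty ι with he | hne
  · have : T = ∅ := by
      rw [eq_empty_iff_forall_notMem]
      intro Y hY
      have := hT1 Y hY
      simp only [Lam, univ_eq_empty, sum_empty] at this
      have := Real.log_pos (show (1 : ℝ) < 2 by norm_num)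
      linarith
    subst this
    simp
  have l2 : 0 < Real.log 2 := Real.log_pos (by norm_num)
  have hs0 : (0 : ℝ) < Fintype.card ι := by exact_mod_cast Fintype.card_pos
  choose! g hg1 hg2 using fun Y (hY : Y ∈ T) =>
    G.exists_class Y (hT Y hY) (by linarith [hT1 Y hY])
  have h := card_le_mul_card_image_of_maps_to (s := T) (t := clS ι) (f := g) (fun Y hY => hg1 Y hY) 12 (by
    intro b hb
    refine G.class_card (fun v => ((b v).1 : ℝ) / (7 * Fintype.card ι)) (fun v => by positivity) ?_
      (fun v => (b v).2) _ (fun Y hY => hT Y (mem_filter.1 hY).1)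
      (fun Y hY => hT1 Y (mem_filter.1 hY).1) ?_
    · rw [← sum_div]
      have : ((∑ v, (b v).1 : ℕ) : ℝ) = 6 * Fintype.card ι := by
        rw [(mem_filter.1 hb).2]; push_cast; ring
      push_cast at this
      rw [this]; field_simp
    · intro Y hY v
      have := hg2 Y (mem_filter.1 hY).1 v
      rw [(mem_filter.1 hY).2] at this
      exact this)
  have h' : (T.card : ℝ) ≤ 12 * (clS ι).card := by exact_mod_cast h
  have := clS_card ι
  linarith

end
end EvenOrd

namespace EvenOrd
open Finset

section
variable {N : ℤ} {P : Finset ℕ} {ι : Type} [Fintype ι] {a : ι → ℤ√N → ℝ} {κ : ι → ℝ}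

lemma Places.exp_Ht (G : Places N P a κ) (Y : ℤ) : ∏ v, mx (a v) (tr N Y) = Real.exp (Ht a Y) := by
  rw [Ht, ← Real.log_prod fun v _ => (G.mx_pos Y v).ne', Real.exp_log (prod_pos fun v _ => G.mx_pos Y v)]

lemma Places.small_aux (G : Places N P a κ) (Y D Y0 _D0 : ℤ) (h : Y ^ 2 = 4 * D ^ 3 + N)
    (v : ι) : a v ((4 : ℤ) : ℤ√N) * a v (D : ℤ√N) ^ 3 * a v (tr N 0 2) ^ 2 ≤
      mx (a v) (tr N Y) ^ 2 * mx (a v) (tr N Y0) ^ 2 := by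
  have A := G.abs v
  have e : a v ((4 : ℤ) : ℤ√N) * a v (D : ℤ√N) ^ 3 = a v (tr N Y 0) * a v (tr N Y 1) := by
    rw [← A.mul, tr_mul N Y D h, ← A.pow, ← A.mul, Int.cast_neg, A.neg]
    push_cast; rfl
  have z : a v (tr N 0 2) ≤ mx (a v) (tr N Y0) := le_mx (a v) (tr N Y0) 2
  rw [e, pow_two (mx (a v) (tr N Y))]
  have p0 := A.nonneg (tr N Y 0)
  have p1 := A.nonneg (tr N Y 1)
  have p2 := A.nonneg (tr N 0 2)
  have := (G.mx_pos Y v).le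
  gcongr
  · exact le_mx _ _ 0
  · exact le_mx _ _ 1

lemma Places.small_bound (G : Places N P a κ) (Y D Y0 D0 : ℤ) (h : Y ^ 2 = 4 * D ^ 3 + N) (h0 : Y0 ^ 2 = 4 * D0 ^ 3 + N)
    (hD : SU P D) (hD0 : SU P D0) (hL : Lam a Y < 100 * Real.log 2) (hL0 : Lam a Y0 < 100 * Real.log 2) :
    ∃ x y : ℤ, y ≠ 0 ∧ D * y = x * D0 ∧ |x| ≤ 2 ^ 45 ∧ |y| ≤ 2 ^ 45 := by
  have hg : 0 < Int.gcd D D0 := Int.gcd_pos_of_ne_zero_left _ hD.1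
  obtain ⟨x, y, hxy, hx, hy⟩ := Int.exists_gcd_one hg
  have hSg : SU P (Int.gcd D D0 : ℤ) := hD.of_dvd (Int.gcd_dvd_left ..)
  generalize Int.gcd D D0 = g at *
  have hy0 : y ≠ 0 := fun h => hD0.1 (by rw [hy, h, zero_mul])
  have hmax : max |(x : ℝ)| |(y : ℝ)| ^ 3 ≤ Real.exp (2 * Ht a Y + 2 * Ht a Y0) := by
    have c := G.cop x y (Int.isCoprime_iff_gcd_eq_one.2 hxy)
    have b : ∀ v, a v ((4 : ℤ) : ℤ√N) * (a v ((g : ℤ) : ℤ√N) * max (a v (x : ℤ√N)) (a v (y : ℤ√N))) ^ 3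
        * a v (tr N 0 2) ^ 2 ≤ mx (a v) (tr N Y) ^ 2 * mx (a v) (tr N Y0) ^ 2 := by
      intro v
      have A := G.abs v
      have b1 := G.small_aux Y D Y0 D0 h v
      have b2 := G.small_aux Y0 D0 Y D h0 v
      rw [mul_max_of_nonneg _ _ (A.nonneg _), ← A.mul, ← A.mul, ← Int.cast_mul, ← Int.cast_mul,
        mul_comm (g : ℤ) x, mul_comm (g : ℤ) y, ← hx, ← hy]
      rcases max_choice (a v (D : ℤ√N)) (a v (D0 : ℤ√N)) with e | e <;> rw [e]
      · exact b1
      · linarith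
    have b' := prod_le_prod (s := univ) (fun v _ => by
      have A := G.abs v
      have q1 := A.nonneg ((4 : ℤ) : ℤ√N)
      have q2 := A.nonneg ((g : ℤ) : ℤ√N)
      have q3 := A.nonneg (x : ℤ√N)
      have q4 := q3.trans (le_max_left _ (a v (y : ℤ√N)))
      positivity) (fun v (_ : v ∈ (univ : Finset ι)) => b v)
    simp only [prod_mul_distrib, prod_pow] at b'
    rw [G.unit 4 G.su4, G.unit _ hSg, G.prod2, G.exp_Ht, G.exp_Ht] at b'
    rw [Real.exp_add, two_mul, two_mul, Real.exp_add, Real.exp_add]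
    calc _ ≤ (∏ v, max (a v (x : ℤ√N)) (a v (y : ℤ√N))) ^ 3 := by gcongr
      _ ≤ _ := by nlinarith
  have hb : max |(x : ℝ)| |(y : ℝ)| ≤ 2 ^ 45 := by
    have t1 := G.three_H Y ⟨D, h, hD⟩
    have t2 := G.three_H Y0 ⟨D0, h0, hD0⟩
    have l2 : 0 < Real.log 2 := Real.log_pos (by norm_num)
    have t3 : 2 * Ht a Y + 2 * Ht a Y0 ≤ Real.log ((2 ^ 45) ^ 3) := by
      rw [Real.log_pow, Real.log_pow]; push_cast; linarith
    have t4 := hmax.trans (Real.exp_le_exp.2 t3)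
    rw [Real.exp_log (by positivity)] at t4
    exact le_of_pow_le_pow_left₀ (by norm_num) (by positivity) t4
  refine ⟨x, y, hy0, ?_, ?_, ?_⟩
  · rw [hx, hy]; ring
  · have := (le_max_left _ _).trans hb
    exact_mod_cast this
  · have := (le_max_right _ _).trans hb
    exact_mod_cast this

lemma Places.small_card (G : Places N P a κ) (T : Finset ℤ) (hT : ∀ Y ∈ T, Sol N P Y)
    (hT1 : ∀ Y ∈ T, Lam a Y < 100 * Real.log 2) : T.card ≤ (2 ^ 46 + 1) * (2 ^ 46 + 1) * 2 := by
  rcases T.eq_empty_or_nonempty with rfl | ⟨Y0, hY0⟩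
  · simp
  choose! D hD1 hD2 using hT
  choose! x y h1 h2 h3 h4 using fun Y (hY : Y ∈ T) => G.small_bound Y (D Y) Y0 (D Y0) (hD1 Y hY)
    (hD1 Y0 hY0) (hD2 Y hY) (hD2 Y0 hY0) (hT1 Y hY) (hT1 Y0 hY0)
  obtain ⟨M, hM⟩ : ∃ M : ℕ, M = 2 ^ 45 := ⟨_, rfl⟩
  have hM' : (2 : ℤ) ^ 45 = M := by rw [hM]; norm_num
  rw [hM'] at h3 h4
  have : T.card ≤ ((Icc (-M : ℤ) M) ×ˢ (Icc (-M : ℤ) M) ×ˢ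
      (univ : Finset Bool)).card := by
    apply card_le_card_of_injOn (fun Y => (x Y, y Y, decide (0 ≤ Y)))
    · intro Y hY
      have := abs_le.1 (h3 Y hY)
      have := abs_le.1 (h4 Y hY)
      simp only [coe_product, Set.mem_prod, mem_coe, mem_Icc, mem_univ, and_true]
      omega
    · intro Y hY Y' hY' e
      simp only [Prod.mk.injEq, decide_eq_decide] at e
      obtain ⟨e1, e2, e3⟩ := e
      have k1 := h2 Y hY
      have k2 := h2 Y' hY'
      rw [← e1, ← e2] at k2
      have k3 : D Y = D Y' := mul_right_cancel₀ (h1 Y hY) (k1.trans k2.symm)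
      have k4 := hD1 Y hY
      rw [k3, ← hD1 Y' hY'] at k4
      rcases sq_eq_sq_iff_eq_or_eq_neg.1 k4 with k | k
      · exact k
      · omega
  have e : (Icc (-M : ℤ) M).card = 2 * M + 1 := by
    rw [Int.card_Icc]; omega
  have e2 : 2 * M + 1 = 2 ^ 46 + 1 := by rw [hM]; norm_num
  rw [card_product, card_product, e, e2, card_univ, Fintype.card_bool] at this
  rwa [← mul_assoc] at this

lemma Places.total (G : Places N P a κ) (T : Finset ℤ) (hT : ∀ Y ∈ T, Sol N P Y) :
    (T.card : ℝ) ≤ 12 * ((25 / 21) ^ 6 * (67 / 4)) ^ Fintype.card ι + (2 ^ 46 + 1) * (2 ^ 46 + 1) * 2 := by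
  classical
  have h1 := G.big_card (T.filter fun Y => 100 * Real.log 2 ≤ Lam a Y)
    (fun Y hY => hT Y (mem_filter.1 hY).1) (fun Y hY => (mem_filter.1 hY).2)
  have h2 := G.small_card (T.filter fun Y => ¬ 100 * Real.log 2 ≤ Lam a Y)
    (fun Y hY => hT Y (mem_filter.1 hY).1) (fun Y hY => not_le.1 (mem_filter.1 hY).2)
  have h3 := card_filter_add_card_filter_not (s := T) (fun Y => 100 * Real.log 2 ≤ Lam a Y)
  have h2' : ((T.filter fun Y => ¬ 100 * Real.log 2 ≤ Lam a Y).card : ℝ) ≤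
    (2 ^ 46 + 1) * (2 ^ 46 + 1) * 2 := by exact_mod_cast h2
  rw [← h3]
  push_cast
  linarith

end

lemma numeric (s : ℕ) : 12 * ((25 / 21) ^ 6 * (67 / 4)) ^ s + (2 ^ 46 + 1) * (2 ^ 46 + 1) * 2 ≤
    (7 : ℝ) ^ 60 + 6 * 7 ^ (2 * s) := by
  rcases Nat.lt_or_ge s 27 with h | h
  · have : ((25 / 21 : ℝ) ^ 6 * (67 / 4)) ^ s ≤ ((25 / 21) ^ 6 * (67 / 4)) ^ 26 :=
      pow_le_pow_right₀ (by norm_num) (by omega)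
    have h2 : 12 * ((25 / 21 : ℝ) ^ 6 * (67 / 4)) ^ 26 + (2 ^ 46 + 1) * (2 ^ 46 + 1) * 2 ≤ 7 ^ 60 := by
      norm_num
    have : (0 : ℝ) ≤ 7 ^ (2 * s) := by positivity
    linarith
  · obtain ⟨k, rfl⟩ := Nat.exists_eq_add_of_le h
    have h1 : ((25 / 21 : ℝ) ^ 6 * (67 / 4)) ^ (27 + k) * 2 ≤ 7 ^ (2 * (27 + k)) := by
      rw [pow_mul (7 : ℝ) 2, pow_add, pow_add]
      have q1 : ((25 / 21 : ℝ) ^ 6 * (67 / 4)) ^ k ≤ (7 ^ 2) ^ k := by gcongr; norm_num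
      have q2 : ((25 / 21 : ℝ) ^ 6 * (67 / 4)) ^ 27 * 2 ≤ (7 ^ 2) ^ 27 := by norm_num
      calc _ = (((25 / 21 : ℝ) ^ 6 * (67 / 4)) ^ 27 * 2) * ((25 / 21 : ℝ) ^ 6 * (67 / 4)) ^ k := by ring
        _ ≤ _ := by gcongr
    have : (2 ^ 46 + 1) * (2 ^ 46 + 1) * 2 ≤ (7 : ℝ) ^ 60 := by norm_num
    linarith

end EvenOrd

namespace EvenOrd
open Finset

lemma abs_arch {R : Type*} [CommRing R] {L : Type*} [NormedField L] [CharZero L]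
    (φ : R →+* L) (hI : ∀ n : ℕ, ‖(n : L)‖ ≤ n) : Abs (fun x => ‖φ x‖) 2 where
  nonneg _ := norm_nonneg _
  mul x y := by simp
  one := by simp
  zero := by simp
  neg x := by simp
  int k h := by simpa using h
  hκ := by norm_num
  add x y := by
    have h1 := norm_add_le (φ x) (φ y)
    have h2 := le_max_left ‖φ x‖ ‖φ y‖
    have h3 := le_max_right ‖φ x‖ ‖φ y‖
    rw [map_add]; linarith
  hW m x y := by
    rw [W_map, W]
    refine (norm_sum_le _ _).trans ?_
    have hc := W_coef_le m
    have hc' : (∑ k ∈ range (m + 1), ((m + k).choose m * (m + (m - k)).choose m : ℝ)) ≤ 2 ^ (3 * m) := by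
      exact_mod_cast hc
    refine le_trans ?_ (mul_le_mul_of_nonneg_right hc' (by positivity))
    rw [sum_mul]
    refine sum_le_sum fun k hk => ?_
    have hk' : k ≤ m := by simpa [Nat.lt_succ_iff] using hk
    push_cast
    rw [norm_mul, norm_mul, norm_mul, norm_mul, norm_pow, norm_pow, norm_pow, norm_neg, norm_one, one_pow, one_mul]
    have e : max ‖φ x‖ ‖φ y‖ ^ m = max ‖φ x‖ ‖φ y‖ ^ k * max ‖φ x‖ ‖φ y‖ ^ (m - k) := by
      rw [← pow_add]; congr 1; omega
    rw [e]
    have := hI ((m + k).choose m)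
    have := hI ((m + (m - k)).choose m)
    gcongr
    · exact le_max_left _ _
    · exact le_max_right _ _

lemma abs_na {R : Type*} [CommRing R] {L : Type*} [NormedField L] [CharZero L] [IsUltrametricDist L]
    (φ : R →+* L) : Abs (fun x => ‖φ x‖) 1 where
  nonneg _ := norm_nonneg _
  mul x y := by simp
  one := by simp
  zero := by simp
  neg x := by simp
  int k h := by simpa using h
  hκ := le_rfl
  add x y := by
    rw [map_add, one_mul]; exact IsUltrametricDist.norm_add_le_max _ _
  hW m x y := by
    rw [W_map, W, one_pow, one_mul]
    refine IsUltrametricDist.norm_sum_le_of_forall_le_of_nonneg (by positivity) fun k hk => ?_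
    have hk' : k ≤ m := by simpa [Nat.lt_succ_iff] using hk
    have e : max ‖φ x‖ ‖φ y‖ ^ m = max ‖φ x‖ ‖φ y‖ ^ k * max ‖φ x‖ ‖φ y‖ ^ (m - k) := by
      rw [← pow_add]; congr 1; omega
    rw [norm_mul, norm_mul, norm_pow, norm_pow, e, ← one_mul (max ‖φ x‖ ‖φ y‖ ^ k * _)]
    gcongr
    · exact IsUltrametricDist.norm_intCast_le_one L _
    · exact le_max_left _ _
    · exact le_max_right _ _

lemma exists_hom (N : ℤ) (L : Type*) [Field L] [IsAlgClosed L] : ∃ _ : ℤ√N →+* L, True := by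
  obtain ⟨r, hr⟩ := IsAlgClosed.exists_pow_nat_eq (N : L) (n := 2) (by norm_num)
  exact ⟨Zsqrtd.lift ⟨r, by rw [← hr, pow_two]⟩, trivial⟩

lemma local_inf (N : ℤ) : ∃ b : ℤ√N → ℝ, Abs b 2 ∧ ∀ k : ℤ, b (k : ℤ√N) = |(k : ℝ)| := by
  obtain ⟨φ, -⟩ := exists_hom N ℂ
  refine ⟨_, abs_arch φ fun n => by simp, fun k => ?_⟩
  simp

lemma norm_fac (p : ℕ) [Fact p.Prime] (k : ℤ) (hk : k ≠ 0) :
    ‖(k : ℚ_[p])‖ = ((p : ℝ) ^ (k.natAbs.factorization p))⁻¹ := by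
  rw [Padic.norm_eq_zpow_neg_valuation (by exact_mod_cast hk), Padic.valuation_intCast,
    zpow_neg, zpow_natCast, padicValInt, Nat.factorization_def _ Fact.out]

lemma local_p (N : ℤ) (p : ℕ) (hp : p.Prime) : ∃ b : ℤ√N → ℝ, Abs b 1 ∧
    ∀ k : ℤ, k ≠ 0 → b (k : ℤ√N) = ((p : ℝ) ^ (k.natAbs.factorization p))⁻¹ := by
  have : Fact p.Prime := ⟨hp⟩
  obtain ⟨φ, -⟩ := exists_hom N (PadicAlgCl p)
  refine ⟨_, abs_na φ, fun k hk => ?_⟩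
  rw [map_intCast, ← norm_fac p k hk, ← PadicAlgCl.norm_extends]
  simp

lemma exists_places (N : ℤ) (P : Finset ℕ) (hP : ∀ p ∈ P, p.Prime) (hN : SU P (4 * N)) :
    ∃ (a : Option {p // p ∈ P} → ℤ√N → ℝ) (κ : Option {p // p ∈ P} → ℝ), Places N P a κ := by
  obtain ⟨b, hb1, hb2⟩ := local_inf N
  choose c hc1 hc2 using fun p : {p // p ∈ P} => local_p N p (hP p p.2)
  have hpr : ∀ k : ℤ, k ≠ 0 → ∏ p : {p // p ∈ P}, c p (k : ℤ√N) =
      ((∏ p ∈ P, p ^ (k.natAbs.factorization p) : ℕ) : ℝ)⁻¹ := by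
    intro k hk
    rw [Nat.cast_prod, ← prod_inv_distrib, ← prod_coe_sort P]
    refine prod_congr rfl fun p _ => ?_
    rw [hc2 p k hk, Nat.cast_pow]
  have hpp : ∀ k : ℤ, 0 < ∏ p ∈ P, p ^ (k.natAbs.factorization p) := fun k =>
    prod_pos fun p hp => pow_pos (hP p hp).pos _
  have hab : ∀ k : ℤ, |(k : ℝ)| = (k.natAbs : ℝ) := fun k => by rw [Nat.cast_natAbs]; simp
  refine ⟨fun v => v.elim b c, fun v => v.elim 2 fun _ => 1, ?_, ?_, ?_, ?_, ?_, hN⟩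
  · rintro (_ | p)
    · exact hb1
    · exact hc1 p
  · rw [Fintype.prod_option]; simp
  · intro k hk
    rw [Fintype.prod_option]
    simp only [Option.elim]
    rw [hb2, hpr k hk, hab]
    have := hpp k
    rw [← div_eq_mul_inv, one_le_div (by exact_mod_cast this), Nat.cast_le]
    apply Nat.le_of_dvd (Int.natAbs_pos.2 hk)
    have hk' : k.natAbs ≠ 0 := Int.natAbs_ne_zero.2 hk
    apply Finset.prod_dvd_of_isRelPrime
    · intro p hp q hq hpq
      exact (Nat.coprime_iff_isRelPrime.1 (Nat.Coprime.pow _ _ ((Nat.coprime_primes (hP p hp) (hP q hq)).2 hpq)))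
    · intro p _
      exact Nat.ordProj_dvd _ _
  · intro k hk
    rw [Fintype.prod_option]
    simp only [Option.elim]
    rw [hb2, hpr k hk.1, hab]
    have hk' : k.natAbs ≠ 0 := Int.natAbs_ne_zero.2 hk.1
    have e : ∏ p ∈ P, p ^ (k.natAbs.factorization p) = k.natAbs := by
      conv_rhs => rw [← Nat.prod_factorization_pow_eq_self hk']
      rw [Finsupp.prod_of_support_subset _ (s := P) _ _ (by simp)]
      intro p hp
      rw [Nat.support_factorization, Nat.mem_primeFactors] at hp
      exact hk.2 p hp.1 (Int.natCast_dvd.2 hp.2.1)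
    rw [e, mul_inv_cancel₀ (by exact_mod_cast hk')]
  · intro x y hxy
    rw [Fintype.prod_option]
    simp only [Option.elim]
    rw [hb2, hb2]
    refine le_mul_of_one_le_right (by positivity) ?_
    have : ∏ p : {p // p ∈ P}, (1 : ℝ) ≤ ∏ p : {p // p ∈ P}, max (c p (x : ℤ√N)) (c p (y : ℤ√N)) := by
      refine prod_le_prod (fun _ _ => zero_le_one) fun p _ => ?_
      have key : ∀ z : ℤ, ¬ ((p : ℕ) : ℤ) ∣ z → 1 ≤ c p (z : ℤ√N) := by
        intro z hz
        have hz0 : z ≠ 0 := fun h => hz (by simp [h])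
        rw [hc2 p z hz0, Nat.factorization_eq_zero_of_not_dvd fun h => hz (Int.natCast_dvd.2 h)]
        simp
      by_cases h : ((p : ℕ) : ℤ) ∣ x
      · refine le_max_of_le_right (key y fun h' => ?_)
        have hu := hxy.isUnit_of_dvd' h h'
        exact (Nat.prime_iff_prime_int.1 (hP p p.2)).not_isUnit hu
      · exact le_max_of_le_left (key x h)
    simpa using this

end EvenOrd

namespace EvenOrd
open Finset

lemma int_root (A B : ℤ) (x : ℚ) (h : x ^ 3 + A * x + B = 0) : ∃ r : ℤ, r ^ 3 + A * r + B = 0 := by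
  have hm : (Polynomial.X ^ 3 + (Polynomial.C A * Polynomial.X + Polynomial.C B) : Polynomial ℤ).Monic := by
    apply Polynomial.monic_X_pow_add
    compute_degree!
  obtain ⟨r, hr⟩ := isInteger_of_is_root_of_monic (K := ℚ) hm (r := x) (by
    simp; linarith)
  refine ⟨r, ?_⟩
  rw [← hr] at h
  simp only [eq_intCast] at h
  exact_mod_cast h

lemma two_tors (A B : ℤ) (n : ℕ) (hn : n ∈ ({2, 4, 6, 8, 10, 12} : Set ℕ))
    (P : WeierstrassCurve.Affine.Point (⟨0, 0, 0, (A : ℚ), (B : ℚ)⟩ : WeierstrassCurve.Affine ℚ))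
    (hP : addOrderOf P = n) : ∃ r : ℤ, r ^ 3 + A * r + B = 0 := by
  obtain ⟨k, hk, rfl⟩ : ∃ k, 0 < k ∧ n = 2 * k := by
    simp only [Set.mem_insert_iff, Set.mem_singleton_iff] at hn
    rcases hn with rfl | rfl | rfl | rfl | rfl | rfl
    exacts [⟨1, by simp⟩, ⟨2, by simp⟩, ⟨3, by simp⟩, ⟨4, by simp⟩, ⟨5, by simp⟩, ⟨6, by simp⟩]
  have h1 : k • P ≠ 0 := by
    intro h
    have := Nat.le_of_dvd hk (addOrderOf_dvd_of_nsmul_eq_zero h)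
    omega
  have h2 : k • P = - (k • P) := by
    rw [eq_neg_iff_add_eq_zero, ← two_nsmul, ← mul_nsmul', ← hP]
    exact addOrderOf_nsmul_eq_zero P
  generalize k • P = Q at h1 h2
  rcases Q with _ | ⟨x, y, hxy⟩
  · exact absurd rfl h1
  · rw [WeierstrassCurve.Affine.Point.neg_some] at h2
    have h3 : y = - y := by
      have := (WeierstrassCurve.Affine.Point.some.inj h2).2
      simpa [WeierstrassCurve.Affine.negY] using this
    have h4 : y = 0 := by linarith
    have h5 := (WeierstrassCurve.Affine.equation_iff _ _).1 hxy.1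
    simp only [h4] at h5
    exact int_root A B x (by linarith)

lemma count (N : ℤ) (P : Finset ℕ) (hP : ∀ p ∈ P, p.Prime) (hN : SU P (4 * N)) (T : Finset ℤ)
    (hT : ∀ Y ∈ T, Sol N P Y) : T.card ≤ 7 ^ 60 + 6 * 7 ^ (2 * (P.card + 1)) := by
  obtain ⟨a, κ, G⟩ := exists_places N P hP hN
  have h := (G.total T hT).trans (numeric _)
  rw [Fintype.card_option, Fintype.card_coe] at h
  exact_mod_cast h

lemma cube_inj (x y : ℤ) (h : x ^ 3 = y ^ 3) : x = y :=
  (Odd.strictMono_pow (R := ℤ) (by decide : Odd 3)).injective h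

end EvenOrd

open WeierstrassCurve

theorem bound_even_orders (Δ : ℤ) (hΔ : Δ ≠ 0) (t : ℕ)
    (ht : t = Δ.natAbs.primeFactors.card) (n : ℕ)
    (hn : n ∈ ({2, 4, 6, 8, 10, 12} : Set ℕ)) (S : Set (ℤ × ℤ))
    (hS : S = {AB : ℤ × ℤ | 4 * AB.1 ^ 3 + 27 * AB.2 ^ 2 ≠ 0 ∧
      -16 * (4 * AB.1 ^ 3 + 27 * AB.2 ^ 2) = Δ ∧
      ∃ P : WeierstrassCurve.Affine.Point
        (⟨0, 0, 0, (AB.1 : ℚ), (AB.2 : ℚ)⟩ : WeierstrassCurve.Affine ℚ),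
        addOrderOf P = n}) :
    S.Finite ∧ S.ncard ≤ 7 ^ 60 + 6 * 7 ^ (2 * (t + 1)) := by
  rcases S.eq_empty_or_nonempty with he | ⟨⟨A₀, B₀⟩, h₀⟩
  · rw [he]; simp
  obtain ⟨N, hN⟩ : ∃ N : ℤ, Δ = 16 * N := by
    rw [hS] at h₀
    refine ⟨-(4 * A₀ ^ 3 + 27 * B₀ ^ 2), ?_⟩
    have := h₀.2.1
    simp only at this
    linarith
  set P := Δ.natAbs.primeFactors with hPdef
  have hSU : EvenOrd.SU P Δ := ⟨hΔ, fun p hp h => by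
    rw [hPdef, Nat.mem_primeFactors]
    exact ⟨hp, Int.natCast_dvd.1 h, Int.natAbs_ne_zero.2 hΔ⟩⟩
  have hP : ∀ p ∈ P, p.Prime := fun p hp => Nat.prime_of_mem_primeFactors hp
  have h4N : EvenOrd.SU P (4 * N) := hSU.of_dvd ⟨4, by rw [hN]; ring⟩
  have hcount := EvenOrd.count N P hP h4N
  rw [← ht] at hcount
  have hN0 : N ≠ 0 := fun h => hΔ (by rw [hN, h]; norm_num)
  have hroot : ∀ AB ∈ S, ∃ r : ℤ, r ^ 3 + AB.1 * r + AB.2 = 0 := by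
    intro AB hAB
    rw [hS] at hAB
    obtain ⟨-, -, Q, hQ⟩ := hAB
    exact EvenOrd.two_tors _ _ n hn Q hQ
  choose! r hr using hroot
  have hND : ∀ AB ∈ S, N = (3 * r AB ^ 2 + AB.1) ^ 2 * (9 * r AB ^ 2 - 4 * (3 * r AB ^ 2 + AB.1)) := by
    intro AB hAB
    have h1 := hr AB hAB
    rw [hS] at hAB
    have h2 := hAB.2.1
    have hB : AB.2 = -(r AB ^ 3 + AB.1 * r AB) := by linarith
    rw [hB, hN] at h2
    have h3 : N = -(4 * AB.1 ^ 3 + 27 * (-(r AB ^ 3 + AB.1 * r AB)) ^ 2) := by linarith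
    rw [h3]; ring
  have hsol : ∀ AB ∈ S, (3 * r AB * (3 * r AB ^ 2 + AB.1)) ^ 2 = 4 * (3 * r AB ^ 2 + AB.1) ^ 3 + N := by
    intro AB hAB
    linear_combination (-1 : ℤ) * hND AB hAB
  have hD0 : ∀ AB ∈ S, 3 * r AB ^ 2 + AB.1 ≠ 0 := by
    intro AB hAB h
    apply hN0
    rw [hND AB hAB, h]; ring
  have hmaps : Set.MapsTo (fun AB : ℤ × ℤ => 3 * r AB * (3 * r AB ^ 2 + AB.1)) S {Y | EvenOrd.Sol N P Y} := by
    intro AB hAB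
    refine ⟨3 * r AB ^ 2 + AB.1, hsol AB hAB, hSU.of_dvd ?_⟩
    rw [hN]
    have h := hND AB hAB
    refine Dvd.dvd.mul_left ?_ _
    refine ⟨(3 * r AB ^ 2 + AB.1) * (9 * r AB ^ 2 - 4 * (3 * r AB ^ 2 + AB.1)), ?_⟩
    linear_combination h
  have hinj : Set.InjOn (fun AB : ℤ × ℤ => 3 * r AB * (3 * r AB ^ 2 + AB.1)) S := by
    intro AB hAB AB' hAB' h
    simp only at h
    have e1 := hsol AB hAB
    have e2 := hsol AB' hAB'
    rw [h] at e1
    have e3 := EvenOrd.cube_inj (3 * r AB ^ 2 + AB.1) (3 * r AB' ^ 2 + AB'.1) (by linarith)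
    rw [e3] at h
    have e4 : r AB = r AB' := by
      have := mul_right_cancel₀ (hD0 AB' hAB') h
      linarith
    have e5 : AB.1 = AB'.1 := by rw [e4] at e3; linarith
    have e6 := hr AB hAB
    have e7 := hr AB' hAB'
    rw [e4, e5] at e6
    exact Prod.ext e5 (by linarith)
  have hfinY : {Y | EvenOrd.Sol N P Y}.Finite := by
    by_contra hinf
    obtain ⟨T, hT1, hT2⟩ := Set.Infinite.exists_subset_card_eq hinf (7 ^ 60 + 6 * 7 ^ (2 * (t + 1)) + 1)
    have := hcount T fun Y hY => hT1 hY
    omega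
  refine ⟨Set.Finite.of_injOn hmaps hinj hfinY, ?_⟩
  refine (Set.ncard_le_ncard_of_injOn _ hmaps hinj hfinY).trans ?_
  rw [Set.ncard_eq_toFinset_card _ hfinY]
  exact hcount _ fun Y hY => by simpa using hY
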